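/- Let X be a K-convex complex Banach space and p ∈ (1,∞). Then there exist α ∈ [1,2) and C ∈ (0,∞) such that for every n,d ∈ ℕ with 1 ≤ d ≤ n, every function f : {-1,1}^n → X of degree at most d satisfies ‖Δf‖_{L_p({-1,1}^n;X)} ≤ C d^α ‖f‖_{L_p({-1,1}^n;X)}. -/

import Mathlib

open scoped BigOperators ENNReal NNReal

noncomputable section

namespace HammingCube

variable {X : Type*} [NormedAddCommGroup X] [NormedSpace ℂ X]

/-- The sign ±1 associated to a boolean coordinate. -/
def sgn (b : Bool) : ℝ := if b then 1 else -1

/-- The Walsh function `w_A(ε) = ∏_{i ∈ A} ε_i`. -/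
def walsh {n : ℕ} (A : Finset (Fin n)) (ε : Fin n → Bool) : ℝ := ∏ i ∈ A, sgn (ε i)

/-- The Fourier–Walsh coefficient `f̂(A) = 2⁻ⁿ ∑_δ f(δ) w_A(δ)`. -/
def coeff {n : ℕ} (f : (Fin n → Bool) → X) (A : Finset (Fin n)) : X :=
  (2 ^ n : ℝ)⁻¹ • ∑ δ : Fin n → Bool, walsh A δ • f δ

/-- `f` has degree at most `d`: `f̂(A) = 0` whenever `|A| > d`. -/
def degLE {n : ℕ} (f : (Fin n → Bool) → X) (d : ℕ) : Prop :=
  ∀ A : Finset (Fin n), d < A.card → coeff f A = 0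

/-- `f` belongs to the `d`-th tail space: `f̂(A) = 0` whenever `|A| < d`. -/
def tailSpace {n : ℕ} (f : (Fin n → Bool) → X) (d : ℕ) : Prop :=
  ∀ A : Finset (Fin n), A.card < d → coeff f A = 0

/-- The heat semigroup `e^{-tΔ} f = ∑_A e^{-t|A|} f̂(A) w_A`. -/
def heat {n : ℕ} (t : ℝ) (f : (Fin n → Bool) → X) : (Fin n → Bool) → X :=
  fun ε => ∑ A : Finset (Fin n), Real.exp (-t * A.card) • walsh A ε • coeff f A

/-- The hypercube Laplacian `Δ f = ∑_A |A| f̂(A) w_A`. -/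
def lap {n : ℕ} (f : (Fin n → Bool) → X) : (Fin n → Bool) → X :=
  fun ε => ∑ A : Finset (Fin n), (A.card : ℝ) • walsh A ε • coeff f A

/-- The fractional Laplacian `Δ^γ f = ∑_A |A|^γ f̂(A) w_A`. -/
def fracLap {n : ℕ} (γ : ℝ) (f : (Fin n → Bool) → X) : (Fin n → Bool) → X :=
  fun ε => ∑ A : Finset (Fin n), ((A.card : ℝ) ^ γ) • walsh A ε • coeff f A

/-- The `i`-th discrete partial derivative. -/
def pderiv {n : ℕ} (i : Fin n) (f : (Fin n → Bool) → X) : (Fin n → Bool) → X :=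
  fun ε => (2 : ℝ)⁻¹ • (f ε - f (Function.update ε i (!(ε i))))

/-- The vector-valued `L_p` norm `(2⁻ⁿ ∑_ε ‖f(ε)‖^p)^{1/p}` for finite `p`. -/
def lpNorm {n : ℕ} {Y : Type*} [NormedAddCommGroup Y] (p : ℝ)
    (f : (Fin n → Bool) → Y) : ℝ :=
  ((2 ^ n : ℝ)⁻¹ * ∑ ε : Fin n → Bool, ‖f ε‖ ^ p) ^ (1 / p)

/-- The `L_∞` norm `max_ε ‖f(ε)‖`. -/
def linfNorm {n : ℕ} {Y : Type*} [NormedAddCommGroup Y]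
    (f : (Fin n → Bool) → Y) : ℝ :=
  ⨆ ε : Fin n → Bool, ‖f ε‖

/-- The `L_p` norm for `p ∈ [1,∞]` encoded as `p : ℝ≥0∞`. -/
def lpNormE {n : ℕ} {Y : Type*} [NormedAddCommGroup Y] (p : ℝ≥0∞)
    (f : (Fin n → Bool) → Y) : ℝ :=
  if p = ⊤ then linfNorm f else lpNorm p.toReal f

/-- The scalar `L_p` norm of the gradient `‖(∑_i |∂_i f|²)^{1/2}‖_{L_p}`. -/
def gradLpNorm {n : ℕ} (p : ℝ) (f : (Fin n → Bool) → ℂ) : ℝ :=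
  lpNorm p (fun ε => Real.sqrt (∑ i : Fin n, ‖pderiv i f ε‖ ^ 2))

/-- The Rademacher projection `Rad f(ε) = ∑_i f̂({i}) ε_i`. -/
def Rad {n : ℕ} (f : (Fin n → Bool) → X) : (Fin n → Bool) → X :=
  fun ε => ∑ i : Fin n, sgn (ε i) • coeff f {i}

/-- A complex Banach space is `K`-convex if the Rademacher projections are uniformly
bounded on `L_q` for some `q ∈ (1,∞)`. -/
def KConvex (X : Type*) [NormedAddCommGroup X] [NormedSpace ℂ X] : Prop :=
  ∃ q : ℝ, 1 < q ∧ ∃ M : ℝ, ∀ (n : ℕ) (f : (Fin n → Bool) → X),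
    lpNorm q (Rad f) ≤ M * lpNorm q f

/-- `X` has cotype `q` with constant `C`. -/
def HasCotype (X : Type*) [NormedAddCommGroup X] [NormedSpace ℂ X] (q C : ℝ) : Prop :=
  ∀ (n : ℕ) (x : Fin n → X),
    C⁻¹ * (∑ i : Fin n, ‖x i‖ ^ q) ^ (1 / q) ≤
      ((2 ^ n : ℝ)⁻¹ * ∑ ε : Fin n → Bool, ‖∑ i : Fin n, sgn (ε i) • x i‖ ^ q) ^ (1 / q)

/-- The entropy `Ent(h)` of a nonnegative function on the cube. -/
def entropy {n : ℕ} (h : (Fin n → Bool) → ℝ) : ℝ :=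
  (2 ^ n : ℝ)⁻¹ * ∑ ε : Fin n → Bool, h ε * Real.log (h ε) -
    ((2 ^ n : ℝ)⁻¹ * ∑ ε : Fin n → Bool, h ε) *
      Real.log ((2 ^ n : ℝ)⁻¹ * ∑ ε : Fin n → Bool, h ε)

/-- The `L_∞` norm of the gradient `max_ε (∑_i |∂_i f(ε)|²)^{1/2}`. -/
def gradLinfNorm {n : ℕ} (f : (Fin n → Bool) → ℂ) : ℝ :=
  ⨆ ε : Fin n → Bool, Real.sqrt (∑ i : Fin n, ‖pderiv i f ε‖ ^ 2)


lemma sum_cons_bool {n : ℕ} (F : (Fin (n + 1) → Bool) → ℝ) :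
    ∑ δ : Fin (n + 1) → Bool, F δ
      = ∑ δ : Fin n → Bool, (F (Fin.cons true δ) + F (Fin.cons false δ)) := by
  rw [← (Fin.consEquiv (fun _ : Fin (n + 1) => Bool)).sum_comp F, Fintype.sum_prod_type]
  simp [Fin.consEquiv, Finset.sum_add_distrib]

lemma moment_two {n : ℕ} (a : Fin n → ℝ) (ha : ∀ i, a i ^ 2 = 1) :
    ∑ δ : Fin n → Bool, (∑ i, a i * sgn (δ i)) ^ 2 = 2 ^ n * n := by
  induction n with
  | zero => simp
  | succ n ih =>
    rw [sum_cons_bool]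
    have h : ∀ δ : Fin n → Bool,
        ((∑ i, a i * sgn ((Fin.cons true δ : Fin (n + 1) → Bool) i)) ^ 2
          + (∑ i, a i * sgn ((Fin.cons false δ : Fin (n + 1) → Bool) i)) ^ 2)
        = 2 * (∑ i, a i.succ * sgn (δ i)) ^ 2 + 2 := by
      intro δ
      simp only [Fin.sum_univ_succ, Fin.cons_zero, Fin.cons_succ]
      have := ha 0
      simp only [sgn, if_true, Bool.false_eq_true, if_false]
      linear_combination 2 * this
    simp only [h]
    rw [Finset.sum_add_distrib, ← Finset.mul_sum, ih (fun i => a i.succ) (fun i => ha _)]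
    simp
    ring

lemma moment_four {n : ℕ} (a : Fin n → ℝ) (ha : ∀ i, a i ^ 2 = 1) :
    ∑ δ : Fin n → Bool, (∑ i, a i * sgn (δ i)) ^ 4 = 2 ^ n * (3 * n ^ 2 - 2 * n) := by
  induction n with
  | zero => simp
  | succ n ih =>
    rw [sum_cons_bool]
    have h : ∀ δ : Fin n → Bool,
        ((∑ i, a i * sgn ((Fin.cons true δ : Fin (n + 1) → Bool) i)) ^ 4
          + (∑ i, a i * sgn ((Fin.cons false δ : Fin (n + 1) → Bool) i)) ^ 4)
        = 2 * (∑ i, a i.succ * sgn (δ i)) ^ 4 + 12 * (∑ i, a i.succ * sgn (δ i)) ^ 2 + 2 := by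
      intro δ
      simp only [Fin.sum_univ_succ, Fin.cons_zero, Fin.cons_succ]
      have := ha 0
      simp only [sgn, if_true, Bool.false_eq_true, if_false]
      generalize ∑ i : Fin n, a i.succ * (if δ i = true then (1:ℝ) else -1) = S
      linear_combination (12 * S ^ 2 + 2 * (a 0 ^ 2 + 1)) * this
    simp only [h]
    rw [Finset.sum_add_distrib, Finset.sum_add_distrib, ← Finset.mul_sum, ← Finset.mul_sum,
      ih (fun i => a i.succ) (fun i => ha _), moment_two (fun i => a i.succ) (fun i => ha _)]
    simp
    ring

/-- First absolute moment lower bound. -/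
lemma moment_one {n : ℕ} (hn : 1 ≤ n) (a : Fin n → ℝ) (ha : ∀ i, a i ^ 2 = 1) :
    2 ^ n * Real.sqrt (n / 3) ≤ ∑ δ : Fin n → Bool, |∑ i, a i * sgn (δ i)| := by
  have hn' : (1 : ℝ) ≤ n := by exact_mod_cast hn
  set b : ℝ := Real.sqrt (3 * n) with hb
  have hb0 : 0 < b := Real.sqrt_pos.2 (by linarith)
  have hb2 : b ^ 2 = 3 * n := Real.sq_sqrt (by linarith)
  have key : ∀ s : ℝ, 3 / (2 * b) * s ^ 2 - 1 / (2 * b ^ 3) * s ^ 4 ≤ |s| := by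
    intro s
    have h1 : s ^ 2 = |s| ^ 2 := (sq_abs s).symm
    have h2 : s ^ 4 = |s| ^ 4 := by rw [show s ^ 4 = (s ^ 2) ^ 2 by ring, h1]; ring
    rw [h1, h2]
    have hx : 0 ≤ |s| := abs_nonneg s
    generalize |s| = x at hx
    have : x - (3 / (2 * b) * x ^ 2 - 1 / (2 * b ^ 3) * x ^ 4)
        = x * ((x - b) ^ 2 * (x + 2 * b)) / (2 * b ^ 3) := by
      field_simp; ring
    have h3 : 0 ≤ x * ((x - b) ^ 2 * (x + 2 * b)) / (2 * b ^ 3) := by positivity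
    linarith
  have hs : Real.sqrt (n / 3) = n / b := by
    rw [Real.sqrt_eq_iff_mul_self_eq (by positivity) (by positivity)]
    field_simp
    linarith
  calc 2 ^ n * Real.sqrt (n / 3) = 2 ^ n * (n / b) := by rw [hs]
    _ ≤ 3 / (2 * b) * (2 ^ n * n) - 1 / (2 * b ^ 3) * (2 ^ n * (3 * n ^ 2 - 2 * n)) := by
      have : 3 / (2 * b) * ((2:ℝ) ^ n * n) - 1 / (2 * b ^ 3) * (2 ^ n * (3 * n ^ 2 - 2 * n))
        - 2 ^ n * (n / b) = 2 ^ n * n / b ^ 3 := by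
        field_simp
        rw [hb2]; ring
      have : 0 ≤ (2:ℝ) ^ n * n / b ^ 3 := by positivity
      linarith
    _ = ∑ δ : Fin n → Bool, (3 / (2 * b) * (∑ i, a i * sgn (δ i)) ^ 2
          - 1 / (2 * b ^ 3) * (∑ i, a i * sgn (δ i)) ^ 4) := by
      rw [Finset.sum_sub_distrib, ← Finset.mul_sum, ← Finset.mul_sum, moment_two a ha,
        moment_four a ha]
    _ ≤ _ := Finset.sum_le_sum fun δ _ => key _

lemma abs_sgn (b : Bool) : |sgn b| = 1 := by cases b <;> simp [sgn]

lemma sgn_sq (b : Bool) : sgn b ^ 2 = 1 := by cases b <;> simp [sgn]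

/-- Quantitative failure of containing copies of the space `ℓ_1`. -/
def SignProp (Y : Type*) [NormedAddCommGroup Y] [NormedSpace ℝ Y] (ι : Type) [Fintype ι]
    (δ : ℝ) : Prop :=
  ∀ y : ι → Y, (∀ i, ‖y i‖ ≤ 1) →
    ∃ s : ι → Bool, ‖∑ i, sgn (s i) • y i‖ ≤ (1 - δ) * Fintype.card ι

lemma lpNorm_le_of_forall {n : ℕ} {Y : Type*} [NormedAddCommGroup Y] {q : ℝ} (hq : 1 < q)
    (f : (Fin n → Bool) → Y) (hf : ∀ ε, ‖f ε‖ ≤ 1) : lpNorm q f ≤ 1 := by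
  unfold lpNorm
  apply Real.rpow_le_one (by positivity) _ (by positivity)
  have : ∑ ε : Fin n → Bool, ‖f ε‖ ^ q ≤ ∑ ε : Fin n → Bool, (1 : ℝ) :=
    Finset.sum_le_sum fun ε _ => Real.rpow_le_one (norm_nonneg _) (hf ε) (by linarith)
  rw [inv_mul_le_iff₀ (by positivity)]
  simpa using this

lemma le_lpNorm_of_forall {n : ℕ} {Y : Type*} [NormedAddCommGroup Y] {q : ℝ} (hq : 1 < q)
    (f : (Fin n → Bool) → Y) (b : ℝ) (hb : 0 ≤ b) (hf : ∀ ε, b ≤ ‖f ε‖) : b ≤ lpNorm q f := by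
  unfold lpNorm
  rw [one_div, Real.le_rpow_inv_iff_of_pos hb (by positivity) (by linarith),
    le_inv_mul_iff₀ (by positivity)]
  have : ∑ ε : Fin n → Bool, b ^ q ≤ ∑ ε : Fin n → Bool, ‖f ε‖ ^ q :=
    Finset.sum_le_sum fun ε _ => Real.rpow_le_rpow hb (hf ε) (by linarith)
  simpa using this

lemma norm_comb_ge {Y : Type*} [NormedAddCommGroup Y] [NormedSpace ℝ Y] {ι : Type} [Fintype ι]
    (y : ι → Y) (hy : ∀ i, ‖y i‖ ≤ 1) (D : ℝ)
    (hs : ∀ s : ι → Bool, D ≤ ‖∑ i, sgn (s i) • y i‖) (a : ι → ℝ) (m : ℝ) (hm : 0 ≤ m)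
    (ha : ∀ i, |a i| ≤ m) :
    m * D - m * Fintype.card ι + ∑ i, |a i| ≤ ‖∑ i, a i • y i‖ := by
  let s : ι → Bool := fun i => decide (0 ≤ a i)
  have hsa : ∀ i, a i = sgn (s i) * |a i| := by
    intro i
    by_cases h : 0 ≤ a i
    · simp [s, sgn, h, abs_of_nonneg h]
    · simp only [s, sgn, h, decide_false]
      rw [abs_of_neg (not_le.1 h)]; simp
  have e : m • ∑ i, sgn (s i) • y i = ∑ i, a i • y i + ∑ i, (sgn (s i) * (m - |a i|)) • y i := by
    rw [Finset.smul_sum, ← Finset.sum_add_distrib]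
    refine Finset.sum_congr rfl fun i _ => ?_
    rw [smul_smul, ← add_smul]
    congr 1
    have := hsa i
    linear_combination -this
  have h1 : m * D ≤ ‖m • ∑ i, sgn (s i) • y i‖ := by
    rw [norm_smul, Real.norm_of_nonneg hm]
    exact mul_le_mul_of_nonneg_left (hs s) hm
  rw [e] at h1
  have h2 : ‖∑ i, (sgn (s i) * (m - |a i|)) • y i‖ ≤ ∑ i, (m - |a i|) := by
    refine (norm_sum_le _ _).trans (Finset.sum_le_sum fun i _ => ?_)
    rw [norm_smul, Real.norm_eq_abs, abs_mul, abs_sgn, one_mul,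
      abs_of_nonneg (sub_nonneg.2 (ha i))]
    exact mul_le_of_le_one_right (sub_nonneg.2 (ha i)) (hy i)
  have h3 := norm_add_le (∑ i, a i • y i) (∑ i, (sgn (s i) * (m - |a i|)) • y i)
  rw [Finset.sum_sub_distrib] at h2
  simp only [Finset.sum_const, Finset.card_univ, nsmul_eq_mul] at h2
  linarith [mul_comm m (Fintype.card ι : ℝ)]

lemma walsh_singleton {n : ℕ} (i : Fin n) (δ : Fin n → Bool) : walsh {i} δ = sgn (δ i) := by
  simp [walsh]

lemma Rad_eq {X : Type*} [NormedAddCommGroup X] [NormedSpace ℂ X] {n : ℕ}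
    (f : (Fin n → Bool) → X) (ε : Fin n → Bool) :
    Rad f ε = ∑ δ : Fin n → Bool, ((2 ^ n : ℝ)⁻¹ * ∑ i, sgn (ε i) * sgn (δ i)) • f δ := by
  simp only [Rad, coeff, walsh_singleton, Finset.smul_sum, smul_smul, Finset.mul_sum,
    Finset.sum_smul]
  rw [Finset.sum_comm]
  refine Finset.sum_congr rfl fun δ _ => Finset.sum_congr rfl fun i _ => ?_
  congr 1; ring

/-- `K`-convexity prevents containing copies of `ℓ_1`. -/
lemma signProp_of_KConvex {X : Type*} [NormedAddCommGroup X] [NormedSpace ℂ X]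
    (hX : KConvex X) : ∃ n : ℕ, 1 ≤ n ∧ SignProp X (Fin n → Bool) (1 / n) := by
  obtain ⟨q, hq, M, hM⟩ := hX
  obtain ⟨k, hk⟩ := exists_nat_gt (|M| + 1)
  have hk0 : (0:ℝ) < k := by have := abs_nonneg M; linarith
  have hk1 : 1 ≤ k := by exact_mod_cast Nat.pos_of_ne_zero (by rintro rfl; simp at hk0)
  refine ⟨3 * k ^ 2, by nlinarith, ?_⟩
  set n := 3 * k ^ 2 with hn
  have hn1 : 1 ≤ n := by nlinarith
  have hn0 : (0:ℝ) < n := by exact_mod_cast hn1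
  have hsq : Real.sqrt ((n:ℝ) / 3) = k := by
    rw [hn]; push_cast
    rw [show (3:ℝ) * k ^ 2 / 3 = k ^ 2 by ring, Real.sqrt_sq hk0.le]
  intro y hy
  by_contra hcon
  push Not at hcon
  have hb : ∀ ε, (k:ℝ) - 1 ≤ ‖Rad y ε‖ := by
    intro ε
    rw [Rad_eq]
    have h := norm_comb_ge y hy _ (fun s => (hcon s).le)
      (fun δ => (2 ^ n : ℝ)⁻¹ * ∑ i, sgn (ε i) * sgn (δ i)) ((2 ^ n : ℝ)⁻¹ * n) (by positivity)
      (by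
        intro δ
        rw [abs_mul, abs_of_pos (by positivity : (0:ℝ) < (2 ^ n : ℝ)⁻¹)]
        gcongr
        refine (Finset.abs_sum_le_sum_abs _ _).trans ?_
        simp [abs_mul, abs_sgn])
    refine le_trans ?_ h
    have h2 := moment_one hn1 (fun i => sgn (ε i)) (fun i => sgn_sq _)
    rw [hsq] at h2
    have hc : (Fintype.card (Fin n → Bool) : ℝ) = 2 ^ n := by simp
    rw [hc]
    simp only [abs_mul, abs_of_pos (by positivity : (0:ℝ) < (2 ^ n : ℝ)⁻¹)]
    rw [← Finset.mul_sum]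
    have h3 : (k:ℝ) ≤ (2 ^ n : ℝ)⁻¹ * ∑ δ : Fin n → Bool, |∑ i, sgn (ε i) * sgn (δ i)| := by
      rw [le_inv_mul_iff₀ (by positivity)]; exact h2
    have h4 : (2 ^ n : ℝ)⁻¹ * n * ((1 - 1 / n) * 2 ^ n) - (2 ^ n : ℝ)⁻¹ * n * 2 ^ n = -1 := by
      field_simp; ring
    linarith
  have h1 := le_lpNorm_of_forall hq (Rad y) _ (by have := abs_nonneg M; linarith) hb
  have h2 := hM n y
  have h3 := lpNorm_le_of_forall hq y hy
  have h0 : 0 ≤ lpNorm q y := by unfold lpNorm; positivity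
  have h4 : M * lpNorm q y ≤ |M| * 1 :=
    mul_le_mul (le_abs_self M) h3 h0 (abs_nonneg M)
  linarith

lemma SignProp.scaled {X : Type*} [NormedAddCommGroup X] [NormedSpace ℝ X] {ι : Type} [Fintype ι]
    {δ : ℝ} (h : SignProp X ι δ) (y : ι → X) (m : ℝ) (hm0 : 0 ≤ m) (hm : ∀ i, m ≤ ‖y i‖) :
    ∃ s : ι → Bool, ‖∑ i, sgn (s i) • y i‖ ≤ ∑ i, ‖y i‖ - δ * Fintype.card ι * m := by
  have hb : ∀ i, ‖(‖y i‖)⁻¹ • y i‖ ≤ 1 := by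
    intro i
    rw [norm_smul, norm_inv, norm_norm]
    exact inv_mul_le_one
  obtain ⟨s, hs⟩ := h _ hb
  refine ⟨s, ?_⟩
  have e : ∑ i, sgn (s i) • y i = m • ∑ i, sgn (s i) • (‖y i‖)⁻¹ • y i
      + ∑ i, (sgn (s i) * (‖y i‖ - m)) • (‖y i‖)⁻¹ • y i := by
    rw [Finset.smul_sum, ← Finset.sum_add_distrib]
    refine Finset.sum_congr rfl fun i _ => ?_
    by_cases hy : y i = 0
    · simp [hy]
    · have : ‖y i‖ ≠ 0 := norm_ne_zero_iff.2 hy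
      simp only [smul_smul, ← add_smul]
      congr 1
      field_simp
      ring
  have h2 : ‖∑ i, (sgn (s i) * (‖y i‖ - m)) • (‖y i‖)⁻¹ • y i‖ ≤ ∑ i, (‖y i‖ - m) := by
    refine (norm_sum_le _ _).trans (Finset.sum_le_sum fun i _ => ?_)
    rw [norm_smul, Real.norm_eq_abs, abs_mul, abs_sgn, one_mul,
      abs_of_nonneg (sub_nonneg.2 (hm i))]
    exact mul_le_of_le_one_right (sub_nonneg.2 (hm i)) (hb i)
  have h1 : ‖m • ∑ i, sgn (s i) • (‖y i‖)⁻¹ • y i‖ ≤ m * ((1 - δ) * Fintype.card ι) := by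
    rw [norm_smul, Real.norm_of_nonneg hm0]
    exact mul_le_mul_of_nonneg_left hs hm0
  rw [e]
  refine (norm_add_le _ _).trans ?_
  rw [Finset.sum_sub_distrib] at h2
  simp only [Finset.sum_const, Finset.card_univ, nsmul_eq_mul] at h2
  linarith

lemma norm_sgn_sum_le {X : Type*} [NormedAddCommGroup X] [NormedSpace ℝ X] {ι : Type} [Fintype ι]
    (y : ι → X) (s : ι → Bool) : ‖∑ i, sgn (s i) • y i‖ ≤ ∑ i, ‖y i‖ := by
  refine (norm_sum_le _ _).trans (Finset.sum_le_sum fun i _ => ?_)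
  rw [norm_smul, Real.norm_eq_abs, abs_sgn, one_mul]

/-- Averaged `p`-version of the sign property. -/
lemma SignProp.average {X : Type*} [NormedAddCommGroup X] [NormedSpace ℝ X] {ι : Type} [Fintype ι]
    [DecidableEq ι] {δ : ℝ} (h : SignProp X ι δ) (hδ : 0 < δ) (hδ1 : δ ≤ 1)
    (hι : 2 ≤ Fintype.card ι) {p : ℝ} (hp : 1 < p) :
    ∃ θ : ℝ, 0 ≤ θ ∧ θ < 1 ∧ ∀ y : ι → X,
      ∑ s : ι → Bool, ‖∑ i, sgn (s i) • y i‖ ^ p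
        ≤ 2 ^ Fintype.card ι * (θ * ((Fintype.card ι : ℝ) ^ (p - 1) * ∑ i, ‖y i‖ ^ p)) := by
  set N := Fintype.card ι with hN
  have hN2 : (2:ℝ) ≤ N := by exact_mod_cast hι
  set r : ℝ := ((N - 1 : ℝ) / N) ^ (p - 1) with hr
  have hr0 : 0 < r := Real.rpow_pos_of_pos (by apply div_pos <;> linarith) _
  have hr1 : r < 1 := Real.rpow_lt_one (by apply div_nonneg <;> linarith)
    (by rw [div_lt_one (by linarith)]; linarith) (by linarith)
  -- choice of η
  obtain ⟨η, hη0, hηN, hη1, hηr⟩ : ∃ η : ℝ, 0 < η ∧ η * N ≤ 1 ∧ η < 1 ∧ r < (1 - η) ^ p := by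
    have hc : Filter.Tendsto (fun η : ℝ => (1 - η) ^ p) (nhds 0) (nhds ((1 - 0) ^ p)) := by
      apply ContinuousAt.tendsto
      apply ContinuousAt.rpow_const (by fun_prop)
      left; norm_num
    rw [sub_zero, Real.one_rpow] at hc
    have h1 := hc.eventually (lt_mem_nhds hr1)
    have h2 : ∀ᶠ η : ℝ in nhds 0, η < 1 / N := gt_mem_nhds (by positivity)
    have h3 : ∀ᶠ η : ℝ in nhds 0, η < 1 := gt_mem_nhds (by positivity)
    have h4 := ((h1.and (h2.and h3)).filter_mono nhdsWithin_le_nhds).and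
      (self_mem_nhdsWithin (s := Set.Ioi (0:ℝ)))
    obtain ⟨η, ⟨ha, hb, hc⟩, hd⟩ := h4.exists
    refine ⟨η, hd, ?_, hc, ha⟩
    rw [lt_div_iff₀ (by linarith)] at hb
    exact hb.le
  have hη' : 0 < (1 - η) ^ p := Real.rpow_pos_of_pos (by linarith) _
  set θ1 := r / (1 - η) ^ p
  have hθ1 : θ1 < 1 := (div_lt_one hη').2 hηr
  set D : ℝ := 2 ^ N
  have hD : 1 ≤ D := one_le_pow₀ (by norm_num)
  set u : ℝ := (1 - δ * N * η) ^ p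
  have hd1 : δ * N * η ≤ 1 := by
    calc δ * N * η = δ * (η * N) := by ring
      _ ≤ 1 * 1 := mul_le_mul hδ1 hηN (by positivity) (by norm_num)
      _ = 1 := by ring
  have hu0 : 0 ≤ u := Real.rpow_nonneg (by linarith) _
  have hu1 : u < 1 := Real.rpow_lt_one (by linarith) (by
    have : 0 < δ * N * η := by positivity
    linarith) (by linarith)
  set θ2 := (D - 1 + u) / D
  have hθ2 : θ2 < 1 := by
    rw [div_lt_one (by linarith)]; linarith
  have hθ20 : 0 ≤ θ2 := div_nonneg (by linarith) (by linarith)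
  refine ⟨max θ1 θ2, le_max_of_le_right hθ20, max_lt hθ1 hθ2, fun y => ?_⟩
  set S := ∑ i, ‖y i‖ with hS
  have hS0 : 0 ≤ S := Finset.sum_nonneg fun i _ => norm_nonneg _
  set Q := ∑ i, ‖y i‖ ^ p with hQ
  have hQ0 : 0 ≤ Q := Finset.sum_nonneg fun i _ => by positivity
  have hcard : (Fintype.card (ι → Bool) : ℝ) = D := by simp [D, hN]
  have hNp : 0 ≤ (N : ℝ) ^ (p - 1) := by positivity
  by_cases hcase : ∃ i, ‖y i‖ < η * S
  · obtain ⟨i, hi⟩ := hcase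
    have h1 : ∑ s : ι → Bool, ‖∑ i, sgn (s i) • y i‖ ^ p ≤ ∑ s : ι → Bool, S ^ p :=
      Finset.sum_le_sum fun s _ => Real.rpow_le_rpow (norm_nonneg _) (norm_sgn_sum_le y s)
        (by linarith)
    rw [Finset.sum_const, Finset.card_univ, nsmul_eq_mul, hcard] at h1
    refine h1.trans (mul_le_mul_of_nonneg_left ?_ (by linarith))
    have h2 : (1 - η) * S ≤ ∑ j ∈ Finset.univ.erase i, ‖y j‖ := by
      have := Finset.add_sum_erase Finset.univ (fun j => ‖y j‖) (Finset.mem_univ i)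
      rw [← hS] at this
      linarith
    have h3 : ((1 - η) * S) ^ p ≤ (N - 1 : ℝ) ^ (p - 1) * Q := by
      refine (Real.rpow_le_rpow (by apply mul_nonneg <;> linarith) h2 (by linarith)).trans ?_
      have h4 := Real.rpow_sum_le_const_mul_sum_rpow (Finset.univ.erase i) (fun j => ‖y j‖) hp.le
      simp only [abs_norm] at h4
      refine h4.trans ?_
      rw [Finset.card_erase_of_mem (Finset.mem_univ i), Finset.card_univ, ← hN,
        Nat.cast_sub (by omega)]
      push_cast
      refine mul_le_mul_of_nonneg_left ?_ (Real.rpow_nonneg (by linarith) _)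
      exact Finset.sum_le_sum_of_subset_of_nonneg (Finset.subset_univ _) fun _ _ _ => by positivity
    rw [Real.mul_rpow (by linarith) hS0] at h3
    have h5 : (N - 1 : ℝ) ^ (p - 1) = r * (N:ℝ) ^ (p - 1) := by
      rw [hr, Real.div_rpow (by linarith) (by linarith)]
      have : (N:ℝ) ^ (p - 1) ≠ 0 := (Real.rpow_pos_of_pos (by linarith) _).ne'
      field_simp
    rw [h5] at h3
    calc S ^ p ≤ θ1 * ((N:ℝ) ^ (p - 1) * Q) := by
          simp only [θ1]
          rw [div_mul_eq_mul_div, le_div_iff₀ hη']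
          linarith
      _ ≤ _ := by
          gcongr
          exact le_max_left _ _
  · push Not at hcase
    obtain ⟨s₀, hs₀⟩ := h.scaled y (η * S) (by positivity) hcase
    rw [← hN, ← hS] at hs₀
    have h1 : ∑ s : ι → Bool, ‖∑ i, sgn (s i) • y i‖ ^ p ≤ u * S ^ p + (D - 1) * S ^ p := by
      rw [← Finset.add_sum_erase Finset.univ _ (Finset.mem_univ s₀)]
      gcongr ?_ + ?_
      · rw [← Real.mul_rpow (by linarith) hS0]
        refine Real.rpow_le_rpow (norm_nonneg _) (hs₀.trans (by linarith)) (by linarith)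
      · refine (Finset.sum_le_sum fun s _ => Real.rpow_le_rpow (norm_nonneg _)
          (norm_sgn_sum_le y s) (by linarith : (0:ℝ) ≤ p)).trans ?_
        rw [Finset.sum_const, Finset.card_erase_of_mem (Finset.mem_univ _), nsmul_eq_mul,
          Finset.card_univ, Nat.cast_sub (Fintype.card_pos), hcard]
        simp [hS]
    have h2 : S ^ p ≤ (N:ℝ) ^ (p - 1) * Q := by
      have h4 := Real.rpow_sum_le_const_mul_sum_rpow Finset.univ (fun j => ‖y j‖) hp.le
      simpa only [abs_norm, Finset.card_univ] using h4
    calc _ ≤ u * S ^ p + (D - 1) * S ^ p := h1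
      _ = D * (θ2 * S ^ p) := by simp only [θ2]; field_simp; ring
      _ ≤ D * (max θ1 θ2 * ((N:ℝ) ^ (p - 1) * Q)) := by
          gcongr
          exact le_max_right _ _

/-- The sign property passes to `L_p`. -/
lemma SignProp.lp {X : Type*} [NormedAddCommGroup X] [NormedSpace ℂ X] {ι : Type} [Fintype ι]
    [DecidableEq ι] {δ : ℝ} (h : SignProp X ι δ) (hδ : 0 < δ) (hδ1 : δ ≤ 1)
    (hι : 2 ≤ Fintype.card ι) {p : ℝ} (hp : 1 < p) [Fact (1 ≤ ENNReal.ofReal p)] :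
    ∃ δ' : ℝ, 0 < δ' ∧ δ' ≤ 1 ∧ ∀ (Ω : Type) [Fintype Ω],
      SignProp (PiLp (ENNReal.ofReal p) (fun _ : Ω => X)) ι δ' := by
  obtain ⟨θ, h0, h1, hθ⟩ := h.average hδ hδ1 hι hp
  have hp0 : 0 < p := by linarith
  refine ⟨1 - θ ^ (1 / p), sub_pos.2 (Real.rpow_lt_one h0 h1 (by positivity)),
    by linarith [Real.rpow_nonneg h0 (1 / p)], ?_⟩
  intro Ω _ y hy
  have htr : (ENNReal.ofReal p).toReal = p := ENNReal.toReal_ofReal hp0.le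
  have hnorm : ∀ f : PiLp (ENNReal.ofReal p) (fun _ : Ω => X),
      ‖f‖ = (∑ ω, ‖f ω‖ ^ p) ^ (1 / p) := by
    intro f
    rw [PiLp.norm_eq_sum (by rw [htr]; exact hp0), htr]
  have hnp : ∀ f : PiLp (ENNReal.ofReal p) (fun _ : Ω => X), ‖f‖ ^ p = ∑ ω, ‖f ω‖ ^ p := by
    intro f
    rw [hnorm, one_div, Real.rpow_inv_rpow (Finset.sum_nonneg fun i _ => by positivity) hp0.ne']
  set N := Fintype.card ι with hN
  have hN2 : (2:ℝ) ≤ N := by exact_mod_cast hι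
  have hsum : ∑ s : ι → Bool, ‖∑ i, sgn (s i) • y i‖ ^ p
      ≤ ∑ s : ι → Bool, θ * (N:ℝ) ^ p := by
    calc ∑ s : ι → Bool, ‖∑ i, sgn (s i) • y i‖ ^ p
        = ∑ ω, ∑ s : ι → Bool, ‖∑ i, sgn (s i) • y i ω‖ ^ p := by
          rw [Finset.sum_comm]
          refine Finset.sum_congr rfl fun s _ => ?_
          rw [hnp]
          refine Finset.sum_congr rfl fun ω _ => ?_
          simp
      _ ≤ ∑ ω, 2 ^ N * (θ * ((N : ℝ) ^ (p - 1) * ∑ i, ‖y i ω‖ ^ p)) :=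
          Finset.sum_le_sum fun ω _ => hθ _
      _ = 2 ^ N * (θ * ((N : ℝ) ^ (p - 1) * ∑ i, ‖y i‖ ^ p)) := by
          simp only [← Finset.mul_sum]
          rw [Finset.sum_comm]
          simp only [hnp]
      _ ≤ 2 ^ N * (θ * ((N : ℝ) ^ (p - 1) * ∑ i : ι, 1)) := by
          gcongr with i
          exact Real.rpow_le_one (norm_nonneg _) (hy i) hp0.le
      _ = ∑ s : ι → Bool, θ * (N:ℝ) ^ p := by
          have : (N:ℝ) ^ p = (N:ℝ) ^ (p - 1) * N := by
            rw [Real.rpow_sub_one (by linarith)]; field_simp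
          rw [this]
          simp [hN]
  obtain ⟨s, -, hs⟩ := Finset.exists_le_of_sum_le Finset.univ_nonempty hsum
  refine ⟨s, ?_⟩
  rw [show 1 - (1 - θ ^ (1 / p)) = θ ^ (1 / p) by ring]
  rw [← Real.rpow_le_rpow_iff (norm_nonneg _) (by positivity) hp0,
    Real.mul_rpow (by positivity) (by positivity), one_div, Real.rpow_inv_rpow h0 hp0.ne']
  exact hs

lemma SignProp.homog {X : Type*} [NormedAddCommGroup X] [NormedSpace ℝ X] {ι : Type} [Fintype ι]
    {δ : ℝ} (h : SignProp X ι δ) (y : ι → X) (R : ℝ) (hR : 0 ≤ R) (hy : ∀ i, ‖y i‖ ≤ R) :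
    ∃ s : ι → Bool, ‖∑ i, sgn (s i) • y i‖ ≤ (1 - δ) * Fintype.card ι * R := by
  rcases hR.eq_or_lt with rfl | hR
  · refine ⟨fun _ => true, ?_⟩
    have : ∀ i, y i = 0 := fun i => norm_le_zero_iff.1 (hy i)
    simp [this]
  · obtain ⟨s, hs⟩ := h (fun i => R⁻¹ • y i) (fun i => by
      rw [norm_smul, norm_inv, Real.norm_of_nonneg hR.le, inv_mul_le_iff₀ hR, mul_one]
      exact hy i)
    refine ⟨s, ?_⟩
    have e : ∑ i, sgn (s i) • y i = R • ∑ i, sgn (s i) • R⁻¹ • y i := by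
      rw [Finset.smul_sum]
      refine Finset.sum_congr rfl fun i _ => ?_
      simp only [smul_smul]
      congr 1
      field_simp
    rw [e, norm_smul, Real.norm_of_nonneg hR.le, mul_comm]
    exact mul_le_mul_of_nonneg_right hs hR.le

/-- The lemma of Pisier on products of commuting projections. -/
lemma SignProp.prod_bound {Y : Type*} [NormedAddCommGroup Y] [NormedSpace ℝ Y] {ι : Type}
    [Fintype ι] [DecidableEq ι] [Nonempty ι] {δ : ℝ} (h : SignProp Y ι δ)
    {R : Type*} [CommRing R] (φ : R →+ Y) (e : ι → R) (he : ∀ i, e i * e i = e i)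
    (hc : ∀ i m, ‖φ (e i * m)‖ ≤ ‖φ m‖) :
    ‖φ (∏ i, (1 - e i))‖ ≤ (2 ^ Fintype.card ι - δ) * ‖φ 1‖ := by
  set N := Fintype.card ι with hN
  have hN0 : 0 < N := Fintype.card_pos
  have hN0' : (0:ℝ) < N := by exact_mod_cast hN0
  set r := ‖φ 1‖ with hr
  have hcB : ∀ (B : Finset ι) (m : R), ‖φ ((∏ i ∈ B, e i) * m)‖ ≤ ‖φ m‖ := by
    intro B
    induction B using Finset.induction_on with
    | empty => intro m; simp
    | insert i B hi ih =>
      intro m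
      rw [Finset.prod_insert hi, mul_assoc]
      exact (hc _ _).trans (ih m)
  set u : Finset ι → R := fun A => (-1) ^ A.card * ∏ i ∈ A, e i with hu
  have hsgn : ∀ (k : ℕ) (m : R), ‖φ ((-1) ^ k * m)‖ = ‖φ m‖ := by
    intro k m
    rcases neg_one_pow_eq_or R k with h | h <;> simp [h]
  have hub : ∀ A, ‖φ (u A)‖ ≤ r := by
    intro A
    have := hcB A 1
    rw [mul_one] at this
    simp only [hu]; rw [hsgn]; exact this
  have hprod : ∏ i, (1 - e i) = ∑ A : Finset ι, u A := by
    have : ∀ i, 1 - e i = 1 + (-1) * e i := fun i => by ring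
    simp only [this]
    rw [Finset.prod_one_add, Finset.powerset_univ]
    refine Finset.sum_congr rfl fun A _ => ?_
    rw [Finset.prod_mul_distrib, Finset.prod_const]
  obtain ⟨s, hs⟩ := h.homog (fun i => φ (e i)) r (norm_nonneg _) (fun i => by
    simpa using hc i 1)
  set B : Finset ι := Finset.univ.filter (fun i => s i = true) with hB
  set z : R := ∑ i, (if s i = true then e i else -e i) with hz
  have hφz : φ z = ∑ i, sgn (s i) • φ (e i) := by
    rw [hz, map_sum]
    refine Finset.sum_congr rfl fun i _ => ?_
    by_cases h : s i = true <;> simp [h, sgn]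
  have hw : ∑ i, u (insert i B) = (-1) ^ B.card * ((∏ i ∈ B, e i) * z) := by
    rw [hz, Finset.mul_sum, Finset.mul_sum]
    refine Finset.sum_congr rfl fun i _ => ?_
    by_cases h : s i = true
    · have hi : i ∈ B := by simp [hB, h]
      rw [Finset.insert_eq_of_mem hi, if_pos h]
      simp only [hu]
      congr 1
      rw [← Finset.mul_prod_erase B e hi]
      linear_combination (- ∏ x ∈ B.erase i, e x) * he i
    · have hi : i ∉ B := by simp [hB, h]
      rw [if_neg h]
      simp only [hu]
      rw [Finset.prod_insert hi, Finset.card_insert_of_notMem hi]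
      ring
  have hw2 : ‖φ (∑ i, u (insert i B))‖ ≤ (1 - δ) * N * r := by
    rw [hw, hsgn]
    refine (hcB _ _).trans ?_
    rw [hφz]; exact hs
  have hdec : (N : ℝ) • φ (∏ i, (1 - e i)) = φ (∑ i, u (insert i B))
      + ∑ i, ∑ A ∈ Finset.univ.erase (insert i B), φ (u A) := by
    rw [map_sum, ← Finset.sum_add_distrib]
    have : ∀ i, φ (u (insert i B)) + ∑ A ∈ Finset.univ.erase (insert i B), φ (u A)
        = φ (∏ i, (1 - e i)) := by
      intro i
      rw [Finset.add_sum_erase _ (fun A => φ (u A)) (Finset.mem_univ _), hprod, map_sum]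
    simp only [this]
    rw [Finset.sum_const, Finset.card_univ, Nat.cast_smul_eq_nsmul]
  have hrest : ‖∑ i, ∑ A ∈ Finset.univ.erase (insert i B), φ (u A)‖ ≤ N * ((2 ^ N - 1) * r) := by
    refine (norm_sum_le _ _).trans ?_
    have : ∀ i ∈ (Finset.univ : Finset ι),
        ‖∑ A ∈ Finset.univ.erase (insert i B), φ (u A)‖ ≤ (2 ^ N - 1) * r := by
      intro i _
      refine (norm_sum_le _ _).trans ((Finset.sum_le_sum fun A _ => hub A).trans ?_)
      rw [Finset.sum_const, Finset.card_erase_of_mem (Finset.mem_univ _), Finset.card_univ,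
        Fintype.card_finset, nsmul_eq_mul, Nat.cast_sub Nat.one_le_two_pow]
      simp [hN]
    refine (Finset.sum_le_sum this).trans ?_
    simp [hN]
  have hfin : N * ‖φ (∏ i, (1 - e i))‖ ≤ (1 - δ) * N * r + N * ((2 ^ N - 1) * r) := by
    have : N * ‖φ (∏ i, (1 - e i))‖ = ‖(N : ℝ) • φ (∏ i, (1 - e i))‖ := by
      rw [norm_smul]; simp
    rw [this, hdec]
    exact (norm_add_le _ _).trans (add_le_add hw2 hrest)
  refine le_of_mul_le_mul_left (hfin.trans (le_of_eq ?_)) hN0'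
  ring

section synth

variable {X : Type*} [NormedAddCommGroup X] [NormedSpace ℂ X]

/-- Synthesis map from Walsh coefficients to `L_p`. -/
def synth (p : ℝ) {n : ℕ} (c : Finset (Fin n) → X) :
    PiLp (ENNReal.ofReal p) (fun _ : Fin n → Bool => X) :=
  WithLp.toLp _ (fun ε => ∑ A, walsh A ε • c A)

lemma synth_apply (p : ℝ) {n : ℕ} (c : Finset (Fin n) → X) (ε : Fin n → Bool) :
    synth p c ε = ∑ A, walsh A ε • c A := rfl

lemma synth_add (p : ℝ) {n : ℕ} (c c' : Finset (Fin n) → X) :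
    synth p (c + c') = synth p c + synth p c' := by
  ext ε
  simp [synth_apply, Finset.sum_add_distrib]

lemma synth_smul (p : ℝ) {n : ℕ} (a : ℂ) (c : Finset (Fin n) → X) :
    synth p (a • c) = a • synth p c := by
  ext ε
  simp only [synth_apply, PiLp.smul_apply, Pi.smul_apply, Finset.smul_sum]
  refine Finset.sum_congr rfl fun A _ => smul_comm _ _ _

/-- The multiplier map. -/
def multMap (p : ℝ) {n : ℕ} (c : Finset (Fin n) → X) :
    (Finset (Fin n) → ℝ) →ₗ[ℝ] PiLp (ENNReal.ofReal p) (fun _ : Fin n → Bool => X) where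
  toFun m := synth p (fun A => m A • c A)
  map_add' m m' := by
    rw [← synth_add]; congr 1; ext A; simp [add_smul]
  map_smul' a m := by
    ext ε
    simp only [synth_apply, PiLp.smul_apply, Finset.smul_sum, RingHom.id_apply, Pi.smul_apply,
      smul_eq_mul]
    refine Finset.sum_congr rfl fun A _ => ?_
    simp only [smul_smul]; congr 1; ring

lemma multMap_apply (p : ℝ) {n : ℕ} (c : Finset (Fin n) → X) (m : Finset (Fin n) → ℝ) :
    multMap p c m = synth p (fun A => m A • c A) := rfl

/-- Multiplier of the conditional expectation averaging the coordinates in `S`. -/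
def emul {n : ℕ} (S : Finset (Fin n)) : Finset (Fin n) → ℝ := fun A => if Disjoint A S then 1 else 0

lemma norm_synth (p : ℝ) (hp : 1 < p) {n : ℕ} (c : Finset (Fin n) → X) :
    ‖synth p c‖ = (∑ ε, ‖synth p c ε‖ ^ p) ^ (1 / p) := by
  have hp0 : 0 < p := by linarith
  have htr : (ENNReal.ofReal p).toReal = p := ENNReal.toReal_ofReal hp0.le
  rw [PiLp.norm_eq_sum (by rw [htr]; exact hp0), htr]

/-- Flip of the `i`-th coordinate. -/
def flipEquiv {n : ℕ} (i : Fin n) : (Fin n → Bool) ≃ (Fin n → Bool) :=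
  Function.Involutive.toPerm (fun ε => Function.update ε i (!(ε i))) (by
    intro ε; ext j
    by_cases h : j = i
    · subst h; simp
    · simp [h])

lemma walsh_flip {n : ℕ} (i : Fin n) (A : Finset (Fin n)) (ε : Fin n → Bool) :
    walsh A (flipEquiv i ε) = (if i ∈ A then -1 else 1) * walsh A ε := by
  have h1 : ∀ j, sgn (flipEquiv i ε j) = (if j = i then -1 else 1) * sgn (ε j) := by
    intro j
    by_cases h : j = i
    · subst h
      simp [flipEquiv, Function.Involutive.toPerm]
      cases ε j <;> simp [sgn]
    · simp [flipEquiv, Function.Involutive.toPerm, h]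
  simp only [walsh, h1, Finset.prod_mul_distrib]
  congr 1
  rw [Finset.prod_ite_eq']

lemma synth_flip (p : ℝ) (hp : 1 < p) {n : ℕ} (i : Fin n) (c : Finset (Fin n) → X) :
    ‖synth p (fun A => (if i ∈ A then (-1:ℝ) else 1) • c A)‖ = ‖synth p c‖ := by
  rw [norm_synth p hp, norm_synth p hp]
  congr 1
  rw [← (flipEquiv i).sum_comp]
  refine Finset.sum_congr rfl fun ε _ => ?_
  congr 2
  simp only [synth_apply, walsh_flip, smul_smul]
  refine Finset.sum_congr rfl fun A _ => ?_
  congr 1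
  split_ifs <;> ring

lemma emul_singleton_contr (p : ℝ) (hp : 1 < p) [Fact (1 ≤ ENNReal.ofReal p)] {n : ℕ} (i : Fin n)
    (c : Finset (Fin n) → X) : ‖synth p (fun A => emul {i} A • c A)‖ ≤ ‖synth p c‖ := by
  have e : synth p (fun A => emul {i} A • c A)
      = (1 / 2 : ℂ) • (synth p c + synth p (fun A => (if i ∈ A then (-1:ℝ) else 1) • c A)) := by
    rw [← synth_add, ← synth_smul]
    congr 1
    ext A
    simp only [emul, Finset.disjoint_singleton_right, Pi.smul_apply, Pi.add_apply]
    by_cases h : i ∈ A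
    · simp [h]
    · simp only [h, not_false_eq_true, if_true, if_false, one_smul, ← two_smul ℂ (c A), smul_smul]
      norm_num
  rw [e, norm_smul]
  have := norm_add_le (synth p c) (synth p (fun A => (if i ∈ A then (-1:ℝ) else 1) • c A))
  rw [synth_flip p hp] at this
  have h2 : ‖(1 / 2 : ℂ)‖ = 1 / 2 := by norm_num
  rw [h2]
  linarith

lemma emul_insert {n : ℕ} (i : Fin n) (S : Finset (Fin n)) (A : Finset (Fin n)) :
    emul (insert i S) A = emul {i} A * emul S A := by
  simp only [emul, Finset.disjoint_singleton_right, Finset.disjoint_insert_right]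
  by_cases h : i ∈ A <;> by_cases h' : Disjoint A S <;> simp [h, h']

lemma emul_contr (p : ℝ) (hp : 1 < p) [Fact (1 ≤ ENNReal.ofReal p)] {n : ℕ} (S : Finset (Fin n))
    (c : Finset (Fin n) → X) : ‖synth p (fun A => emul S A • c A)‖ ≤ ‖synth p c‖ := by
  induction S using Finset.induction_on with
  | empty => simp [emul]
  | insert i S hi ih =>
    refine le_trans ?_ ih
    have := emul_singleton_contr p hp i (fun A => emul S A • c A)
    simpa only [smul_smul, ← emul_insert] using this

/-- Weights. -/
def wt {n : ℕ} (a : ℝ) (S : Finset (Fin n)) : ℝ := (1 - a) ^ S.card * a ^ (Finset.univ \ S).card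

lemma sum_wt_emul {n : ℕ} (a : ℝ) (A : Finset (Fin n)) :
    ∑ S, wt a S * emul S A = a ^ A.card := by
  have h := Finset.prod_add (fun i => if i ∈ A then (0:ℝ) else 1 - a) (fun _ : Fin n => a)
    Finset.univ
  have h1 : ∏ i : Fin n, ((if i ∈ A then (0:ℝ) else 1 - a) + a) = a ^ A.card := by
    have : ∀ i, (if i ∈ A then (0:ℝ) else 1 - a) + a = if i ∈ A then a else 1 := by
      intro i; split_ifs <;> ring
    simp only [this]
    rw [Finset.prod_ite_mem]
    simp
  rw [← h1, h, Finset.powerset_univ]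
  refine Finset.sum_congr rfl fun S _ => ?_
  rw [Finset.prod_const]
  simp only [wt, emul]
  by_cases hd : Disjoint A S
  · have : ∏ i ∈ S, (if i ∈ A then (0:ℝ) else 1 - a) = (1 - a) ^ S.card := by
      rw [Finset.prod_congr rfl (g := fun _ => 1 - a), Finset.prod_const]
      intro i hi
      rw [if_neg (Finset.disjoint_right.1 hd hi)]
    simp [this, hd]
  · have : ∏ i ∈ S, (if i ∈ A then (0:ℝ) else 1 - a) = 0 := by
      rw [Finset.not_disjoint_iff] at hd
      obtain ⟨i, hi, hi'⟩ := hd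
      exact Finset.prod_eq_zero hi' (by simp [hi])
    simp [this, hd]

lemma wt_nonneg {n : ℕ} {a : ℝ} (h0 : 0 ≤ a) (h1 : a ≤ 1) (S : Finset (Fin n)) : 0 ≤ wt a S :=
  mul_nonneg (pow_nonneg (by linarith) _) (pow_nonneg h0 _)

lemma sum_wt {n : ℕ} (a : ℝ) : ∑ S : Finset (Fin n), wt a S = 1 := by
  have := sum_wt_emul a (∅ : Finset (Fin n))
  simpa [emul] using this

lemma heat_contr (p : ℝ) (hp : 1 < p) [Fact (1 ≤ ENNReal.ofReal p)] {n : ℕ} {a : ℝ} (h0 : 0 ≤ a)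
    (h1 : a ≤ 1) (c : Finset (Fin n) → X) :
    ‖synth p (fun A => a ^ A.card • c A)‖ ≤ ‖synth p c‖ := by
  have e : (fun A : Finset (Fin n) => a ^ A.card) = ∑ S, wt a S • emul S := by
    ext A
    simp [← sum_wt_emul]
  have : synth p (fun A => a ^ A.card • c A) = ∑ S, wt a S • synth p (fun A => emul S A • c A) := by
    simp only [← multMap_apply]
    rw [e, map_sum]
    simp only [map_smul]
  rw [this]
  refine (norm_sum_le _ _).trans ?_
  calc ∑ S, ‖wt a S • synth p (fun A => emul S A • c A)‖ ≤ ∑ S, wt a S * ‖synth p c‖ := by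
        refine Finset.sum_le_sum fun S _ => ?_
        rw [norm_smul, Real.norm_of_nonneg (wt_nonneg h0 h1 S)]
        exact mul_le_mul_of_nonneg_left (emul_contr p hp S c) (wt_nonneg h0 h1 S)
    _ = ‖synth p c‖ := by rw [← Finset.sum_mul, sum_wt, one_mul]

lemma heat_diff_bound (p : ℝ) (hp : 1 < p) [Fact (1 ≤ ENNReal.ofReal p)] {ι : Type}
    [Fintype ι] [DecidableEq ι] [Nonempty ι] {δ : ℝ} {n : ℕ}
    (h : SignProp (PiLp (ENNReal.ofReal p) (fun _ : Fin n → Bool => X)) ι δ)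
    {a : ℝ} (h0 : 0 ≤ a) (h1 : a ≤ 1) (c : Finset (Fin n) → X) :
    ‖synth p (fun A => (1 - a ^ A.card) ^ Fintype.card ι • c A)‖
      ≤ (2 ^ Fintype.card ι - δ) * ‖synth p c‖ := by
  have e : (fun A : Finset (Fin n) => (1 - a ^ A.card) ^ Fintype.card ι)
      = ∑ q : ι → Finset (Fin n), (∏ i, wt a (q i)) • ∏ i, (1 - emul (q i)) := by
    ext A
    have h1 : 1 - a ^ A.card = ∑ S, wt a S * (1 - emul S A) := by
      simp only [mul_sub, Finset.sum_sub_distrib, sum_wt_emul, mul_one, sum_wt]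
    rw [h1, ← Finset.card_univ, ← Finset.prod_const, Finset.prod_univ_sum]
    simp only [Fintype.piFinset_univ, Finset.prod_mul_distrib]
    simp
  have h2 : synth p (fun A => (1 - a ^ A.card) ^ Fintype.card ι • c A)
      = ∑ q : ι → Finset (Fin n), (∏ i, wt a (q i)) • multMap p c (∏ i, (1 - emul (q i))) := by
    rw [← multMap_apply p c (fun A : Finset (Fin n) => (1 - a ^ A.card) ^ Fintype.card ι), e,
      map_sum]
    simp only [map_smul]
  have h3 : multMap p c 1 = synth p c := by simp [multMap_apply]
  have hw : ∀ q : ι → Finset (Fin n), 0 ≤ ∏ i, wt a (q i) := fun q =>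
    Finset.prod_nonneg fun i _ => wt_nonneg h0 h1 _
  rw [h2]
  refine (norm_sum_le _ _).trans ?_
  calc _ ≤ ∑ q : ι → Finset (Fin n), (∏ i, wt a (q i))
        * ((2 ^ Fintype.card ι - δ) * ‖synth p c‖) := by
        refine Finset.sum_le_sum fun q _ => ?_
        rw [norm_smul, Real.norm_of_nonneg (hw q)]
        refine mul_le_mul_of_nonneg_left ?_ (hw q)
        rw [← h3]
        refine h.prod_bound (multMap p c).toAddMonoidHom (fun i => emul (q i)) ?_ ?_
        · intro i
          ext A
          simp [emul]
        · intro i m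
          have := emul_contr p hp (q i) (fun A => m A • c A)
          simp only [smul_smul] at this
          exact this
    _ = (2 ^ Fintype.card ι - δ) * ‖synth p c‖ := by
        rw [← Finset.sum_mul]
        have := (Finset.prod_univ_sum (fun _ : ι => (Finset.univ : Finset (Finset (Fin n))))
          (fun _ S => wt a S)).symm
        simp only [Fintype.piFinset_univ, sum_wt, Finset.prod_const_one] at this
        rw [this, one_mul]

end synth

/-- Multiplier functional on a finite sequence of vectors. -/
def mult {Y : Type*} [NormedAddCommGroup Y] [NormedSpace ℂ Y] (d : ℕ) (x : ℕ → Y) (m : ℕ → ℂ) : Y :=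
  ∑ k ∈ Finset.range (d + 1), m k • x k

section mult

variable {Y : Type*} [NormedAddCommGroup Y] [NormedSpace ℂ Y] (d : ℕ) (x : ℕ → Y)

lemma mult_add (m m' : ℕ → ℂ) :
    mult d x (fun k => m k + m' k) = mult d x m + mult d x m' := by
  simp [mult, add_smul, Finset.sum_add_distrib]

lemma mult_sub (m m' : ℕ → ℂ) :
    mult d x (fun k => m k - m' k) = mult d x m - mult d x m' := by
  simp [mult, sub_smul, Finset.sum_sub_distrib]

lemma mult_smul (a : ℂ) (m : ℕ → ℂ) :
    mult d x (fun k => a * m k) = a • mult d x m := by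
  simp [mult, Finset.smul_sum, smul_smul]

lemma mult_sum {ι : Type*} (s : Finset ι) (m : ι → ℕ → ℂ) :
    mult d x (fun k => ∑ i ∈ s, m i k) = ∑ i ∈ s, mult d x (m i) := by
  simp only [mult, Finset.sum_smul]
  rw [Finset.sum_comm]

lemma mult_congr {m m' : ℕ → ℂ} (h : ∀ k ≤ d, m k = m' k) : mult d x m = mult d x m' := by
  refine Finset.sum_congr rfl fun k hk => ?_
  rw [h k (by simpa [Nat.lt_succ_iff] using hk)]

variable {d x}

lemma mult_diff_pow_le (a : ℝ)
    (h1 : ∀ m : ℕ → ℂ, ‖mult d x (fun k => (a:ℂ) ^ k * m k)‖ ≤ ‖mult d x m‖) (j : ℕ) (m : ℕ → ℂ) :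
    ‖mult d x (fun k => (1 - (a:ℂ) ^ k) ^ j * m k)‖ ≤ 2 ^ j * ‖mult d x m‖ := by
  induction j with
  | zero => simp
  | succ j ih =>
    have e : mult d x (fun k => (1 - (a:ℂ) ^ k) ^ (j + 1) * m k)
        = mult d x (fun k => (1 - (a:ℂ) ^ k) ^ j * m k)
          - mult d x (fun k => (a:ℂ) ^ k * ((1 - (a:ℂ) ^ k) ^ j * m k)) := by
      rw [← mult_sub]; congr 1; ext k; ring
    rw [e]
    refine (norm_sub_le _ _).trans ?_
    have := h1 (fun k => (1 - (a:ℂ) ^ k) ^ j * m k)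
    rw [pow_succ]
    linarith

/-- Lower bound for `1 + c T`. -/
lemma lower_bound (a : ℝ) {N : ℕ} {K c c0 : ℝ} (hK : 0 ≤ K) (hc : 0 ≤ c) (hcc : c ≤ c0)
    (hq : (c0 / (1 + c0)) ^ N * K < 1)
    (h1 : ∀ m : ℕ → ℂ, ‖mult d x (fun k => (a:ℂ) ^ k * m k)‖ ≤ ‖mult d x m‖)
    (h2 : ∀ m : ℕ → ℂ, ‖mult d x (fun k => (1 - (a:ℂ) ^ k) ^ N * m k)‖ ≤ K * ‖mult d x m‖)
    (m : ℕ → ℂ) :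
    (1 - (c0 / (1 + c0)) ^ N * K) * ‖mult d x m‖
      ≤ N * 2 ^ N * ‖mult d x (fun k => (1 + (c:ℂ) * (a:ℂ) ^ k) * m k)‖ := by
  set q := (c0 / (1 + c0)) ^ N * K with hqdef
  set r : ℝ := c / (1 + c) with hr
  have hr0 : 0 ≤ r := by positivity
  have hr1 : r ≤ 1 := by rw [hr, div_le_one (by linarith)]; linarith
  have hrr : r ≤ c0 / (1 + c0) := by
    rw [hr, div_le_div_iff₀ (by linarith) (by linarith)]; nlinarith
  have hc1 : (1 + c : ℂ) ≠ 0 := by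
    have : (1 + c : ℝ) ≠ 0 := by linarith
    exact_mod_cast this
  set g := mult d x m
  set h := mult d x (fun k => (1 + (c:ℂ) * (a:ℂ) ^ k) * m k)
  have hid : ∀ k, m k = (r:ℂ) ^ N * ((1 - (a:ℂ) ^ k) ^ N * m k)
      + ∑ j ∈ Finset.range N, ((r:ℂ) ^ j * (1 + c : ℂ)⁻¹) *
        ((1 - (a:ℂ) ^ k) ^ j * ((1 + (c:ℂ) * (a:ℂ) ^ k) * m k)) := by
    intro k
    have hg := mul_neg_geom_sum ((r:ℂ) * (1 - (a:ℂ) ^ k)) N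
    have hrs : (1 + c : ℂ)⁻¹ * (1 + (c:ℂ) * (a:ℂ) ^ k) = 1 - (r:ℂ) * (1 - (a:ℂ) ^ k) := by
      rw [hr]; push_cast; field_simp; ring
    have : ∑ j ∈ Finset.range N, ((r:ℂ) ^ j * (1 + c : ℂ)⁻¹) *
        ((1 - (a:ℂ) ^ k) ^ j * ((1 + (c:ℂ) * (a:ℂ) ^ k) * m k))
        = ((1 - (r:ℂ) * (1 - (a:ℂ) ^ k)) * ∑ j ∈ Finset.range N, ((r:ℂ) * (1 - (a:ℂ) ^ k)) ^ j)
          * m k := by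
      rw [Finset.mul_sum, Finset.sum_mul]
      refine Finset.sum_congr rfl fun j _ => ?_
      rw [← hrs, mul_pow]; ring
    rw [this, hg, mul_pow]; ring
  have hgid : g = (r:ℂ) ^ N • mult d x (fun k => (1 - (a:ℂ) ^ k) ^ N * m k)
      + ∑ j ∈ Finset.range N, ((r:ℂ) ^ j * (1 + c : ℂ)⁻¹) •
        mult d x (fun k => (1 - (a:ℂ) ^ k) ^ j * ((1 + (c:ℂ) * (a:ℂ) ^ k) * m k)) := by
    simp only [← mult_smul, ← mult_sum, ← mult_add]
    exact congrArg (mult d x) (funext hid)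
  have hb1 : ‖(r:ℂ) ^ N • mult d x (fun k => (1 - (a:ℂ) ^ k) ^ N * m k)‖ ≤ q * ‖g‖ := by
    rw [norm_smul, norm_pow, Complex.norm_real, Real.norm_of_nonneg hr0, hqdef, mul_assoc]
    exact mul_le_mul (pow_le_pow_left₀ hr0 hrr _) (h2 m) (norm_nonneg _)
      (pow_nonneg (hr0.trans hrr) _)
  have hb2 : ‖∑ j ∈ Finset.range N, ((r:ℂ) ^ j * (1 + c : ℂ)⁻¹) •
        mult d x (fun k => (1 - (a:ℂ) ^ k) ^ j * ((1 + (c:ℂ) * (a:ℂ) ^ k) * m k))‖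
        ≤ N * 2 ^ N * ‖h‖ := by
    refine (norm_sum_le _ _).trans ?_
    have : ∀ j ∈ Finset.range N, ‖((r:ℂ) ^ j * (1 + c : ℂ)⁻¹) •
        mult d x (fun k => (1 - (a:ℂ) ^ k) ^ j * ((1 + (c:ℂ) * (a:ℂ) ^ k) * m k))‖
        ≤ 2 ^ N * ‖h‖ := by
      intro j hj
      rw [norm_smul]
      have hn : ‖(r:ℂ) ^ j * (1 + c : ℂ)⁻¹‖ ≤ 1 := by
        rw [norm_mul, norm_pow, Complex.norm_real, Real.norm_of_nonneg hr0, norm_inv]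
        have : ‖(1 + c : ℂ)‖ = 1 + c := by
          rw [show (1 + c : ℂ) = ((1 + c : ℝ) : ℂ) by push_cast; rfl, Complex.norm_real,
            Real.norm_of_nonneg (by linarith)]
        rw [this]
        exact mul_le_one₀ (pow_le_one₀ hr0 hr1) (by positivity) (inv_le_one_of_one_le₀ (by linarith))
      calc _ ≤ 1 * (2 ^ j * ‖h‖) :=
            mul_le_mul hn (mult_diff_pow_le a h1 j _) (norm_nonneg _) (by norm_num)
        _ ≤ 2 ^ N * ‖h‖ := by
            rw [one_mul]
            gcongr
            · norm_num
            · exact (Finset.mem_range.1 hj).le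
    refine (Finset.sum_le_sum this).trans ?_
    simp [mul_assoc]
  have : ‖g‖ ≤ q * ‖g‖ + N * 2 ^ N * ‖h‖ := by
    conv_lhs => rw [hgid]
    exact (norm_add_le _ _).trans (add_le_add hb1 hb2)
  linarith

lemma mult_exp_sub (h1 : ∀ t : ℝ, 0 ≤ t → ∀ m : ℕ → ℂ,
      ‖mult d x (fun k => ((Real.exp (-t) : ℝ) : ℂ) ^ k * m k)‖ ≤ ‖mult d x m‖)
    (lam : ℂ) (t : ℝ) (ht : 0 ≤ t) (m : ℕ → ℂ) :
    ‖Complex.exp (t * lam) • mult d x (fun k => ((Real.exp (-t) : ℝ) : ℂ) ^ k * m k) - mult d x m‖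
      ≤ max 1 (Real.exp (t * lam.re)) * ‖mult d x (fun k => (lam - k) * m k)‖ * t := by
  have hexp : ∀ (s : ℝ) (k : ℕ), Complex.exp (s * lam) * ((Real.exp (-s) : ℝ) : ℂ) ^ k
      = Complex.exp (s * (lam - k)) := by
    intro s k
    rw [Complex.ofReal_exp, ← Complex.exp_nat_mul, ← Complex.exp_add]
    congr 1; push_cast; ring
  have hu : ∀ s : ℝ, ∀ m : ℕ → ℂ,
      Complex.exp (s * lam) • mult d x (fun k => ((Real.exp (-s) : ℝ) : ℂ) ^ k * m k)
      = mult d x (fun k => Complex.exp (s * (lam - k)) * m k) := by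
    intro s m
    rw [← mult_smul]
    refine congrArg (mult d x) (funext fun k => ?_)
    rw [← mul_assoc, hexp]
  have hd : ∀ s : ℝ, HasDerivAt (fun s : ℝ => mult d x (fun k => Complex.exp (s * (lam - k)) * m k))
      (mult d x (fun k => Complex.exp (s * (lam - k)) * ((lam - k) * m k))) s := by
    intro s
    unfold mult
    apply HasDerivAt.fun_sum
    intro k _
    apply HasDerivAt.smul_const
    have h := ((((hasDerivAt_id (s:ℂ)).mul_const (lam - k)).cexp).comp_ofReal).mul_const (m k)
    simp only [id, one_mul] at h
    simp only [← mul_assoc]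
    exact h
  have hmv := norm_image_sub_le_of_norm_deriv_le_segment'
    (f := fun s : ℝ => mult d x (fun k => Complex.exp (s * (lam - k)) * m k))
    (a := 0) (b := t) (C := max 1 (Real.exp (t * lam.re)) * ‖mult d x (fun k => (lam - k) * m k)‖)
    (fun s _ => (hd s).hasDerivWithinAt) (by
      intro s hs
      rw [← hu, norm_smul, Complex.norm_exp]
      refine mul_le_mul ?_ (h1 s hs.1 _) (norm_nonneg _) (by positivity)
      have : ((s:ℂ) * lam).re = s * lam.re := by simp
      rw [this]
      rcases le_total 0 lam.re with h | h
      · refine le_max_of_le_right (Real.exp_le_exp.2 ?_)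
        exact mul_le_mul_of_nonneg_right hs.2.le h
      · refine le_max_of_le_left ?_
        rw [Real.exp_le_one_iff]
        exact mul_nonpos_of_nonneg_of_nonpos hs.1 h) t ⟨ht, le_rfl⟩
  rw [hu]
  simpa using hmv

/-- Resolvent estimate in the complement of a sector. -/
lemma resolvent_bound {N : ℕ} {K κ : ℝ} (hK : 0 ≤ K) (hκ : 0 < κ) (hκ1 : κ ≤ 1) :
    let c0 := Real.exp (Real.pi * κ)
    let q := (c0 / (1 + c0)) ^ N * K
    q < 1 →
    (∀ t : ℝ, 0 ≤ t → ∀ m : ℕ → ℂ,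
      ‖mult d x (fun k => ((Real.exp (-t) : ℝ) : ℂ) ^ k * m k)‖ ≤ ‖mult d x m‖) →
    (∀ t : ℝ, 0 ≤ t → ∀ m : ℕ → ℂ,
      ‖mult d x (fun k => (1 - ((Real.exp (-t) : ℝ) : ℂ) ^ k) ^ N * m k)‖ ≤ K * ‖mult d x m‖) →
    ∀ lam : ℂ, lam.re ≤ κ * |lam.im| → ∀ m : ℕ → ℂ,
      ‖lam‖ * ‖mult d x m‖
        ≤ (4 + N * 2 ^ N * c0 * Real.pi * 2 / (1 - q)) * ‖mult d x (fun k => (lam - k) * m k)‖ := by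
  intro c0 q hq h1 h2 lam hlam m
  set g := mult d x m
  set R := ‖mult d x (fun k => (lam - k) * m k)‖ with hR
  have hR0 : 0 ≤ R := norm_nonneg _
  have hc0 : 1 ≤ c0 := Real.one_le_exp (by positivity)
  have hq' : 0 < 1 - q := by linarith
  set C2 := N * 2 ^ N * c0 * Real.pi * 2 / (1 - q) with hC2
  have hC2' : 0 ≤ C2 := by positivity
  have hnorm : ‖lam‖ ≤ |lam.re| + |lam.im| := Complex.norm_le_abs_re_add_abs_im lam
  by_cases hcase : lam.re ≤ - |lam.im|
  · by_cases h0 : lam = 0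
    · rw [h0]; simp; positivity
    have hσ : 0 < -lam.re := by
      rcases (abs_nonneg lam.im).eq_or_lt with h | h
      · have him : lam.im = 0 := abs_eq_zero.1 h.symm
        have : lam.re ≠ 0 := fun hre => h0 (Complex.ext hre him)
        have : lam.re ≤ 0 := by linarith
        exact neg_pos.2 (lt_of_le_of_ne this ‹_›)
      · linarith
    set t := (-lam.re)⁻¹ with ht
    have ht0 : 0 < t := inv_pos.2 hσ
    have htr : t * lam.re = -1 := by rw [ht, inv_neg, neg_mul, inv_mul_cancel₀ (by linarith)]
    have hmv := mult_exp_sub h1 lam t ht0.le m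
    rw [htr, max_eq_left (by rw [Real.exp_le_one_iff]; norm_num), one_mul] at hmv
    have hT : ‖Complex.exp (t * lam) • mult d x (fun k => ((Real.exp (-t) : ℝ) : ℂ) ^ k * m k)‖
        ≤ 1 / 2 * ‖g‖ := by
      rw [norm_smul, Complex.norm_exp]
      have : ((t:ℂ) * lam).re = t * lam.re := by simp
      rw [this, htr]
      refine mul_le_mul ?_ (h1 t ht0.le m) (norm_nonneg _) (by norm_num)
      rw [Real.exp_neg, one_div]
      have := Real.add_one_le_exp (1:ℝ)
      exact inv_anti₀ (by norm_num) (by linarith)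
    have h3 : ‖g‖ ≤ 1 / 2 * ‖g‖ + R * t := by
      have := norm_sub_norm_le g
        (Complex.exp (t * lam) • mult d x (fun k => ((Real.exp (-t) : ℝ) : ℂ) ^ k * m k))
      rw [norm_sub_rev] at this
      linarith
    have h4 : ‖g‖ * (-lam.re) ≤ 2 * R := by
      have : ‖g‖ ≤ 2 * R * t := by linarith
      rw [ht, ← div_eq_mul_inv, le_div_iff₀ hσ] at this
      exact this
    have h5 : ‖lam‖ ≤ 2 * (-lam.re) := by
      rw [abs_of_neg (by linarith)] at hnorm; linarith
    calc ‖lam‖ * ‖g‖ ≤ 2 * (-lam.re) * ‖g‖ := by gcongr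
      _ ≤ 4 * R := by linarith
      _ ≤ (4 + C2) * R := by gcongr; linarith
  · push Not at hcase
    have him : 0 < |lam.im| := by
      by_contra h
      have : |lam.im| = 0 := le_antisymm (not_lt.1 h) (abs_nonneg _)
      rw [this] at hlam hcase
      linarith
    set τ := |lam.im| with hτ
    set t := Real.pi / τ with ht
    have ht0 : 0 < t := div_pos Real.pi_pos him
    set c := Real.exp (t * lam.re) with hc
    have hcc : c ≤ c0 := by
      apply Real.exp_le_exp.2
      rw [ht, div_mul_eq_mul_div, div_le_iff₀ him, mul_assoc]
      exact mul_le_mul_of_nonneg_left hlam Real.pi_pos.le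
    have hexp : Complex.exp (t * lam) = -(c:ℂ) := by
      have e : (t:ℂ) * lam = ((t * lam.re : ℝ) : ℂ) + ((t * lam.im : ℝ) : ℂ) * Complex.I := by
        conv_lhs => rw [← Complex.re_add_im lam]
        push_cast; ring
      rw [e, Complex.exp_add, hc, Complex.ofReal_exp]
      have : Complex.exp (((t * lam.im : ℝ) : ℂ) * Complex.I) = -1 := by
        rcases abs_cases lam.im with ⟨h, -⟩ | ⟨h, -⟩
        · have : t * lam.im = Real.pi := by
            rw [ht, show lam.im = τ from h.symm]; field_simp
          rw [this, Complex.exp_pi_mul_I]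
        · have : t * lam.im = -Real.pi := by
            have h' : lam.im = -τ := by rw [hτ, h]; ring
            rw [ht, h']; field_simp
          rw [this]; push_cast
          rw [neg_mul, Complex.exp_neg, Complex.exp_pi_mul_I]; norm_num
      rw [this]; ring
    have hmv := mult_exp_sub h1 lam t ht0.le m
    have hlow := lower_bound (Real.exp (-t)) hK (Real.exp_pos _).le hcc hq (h1 t ht0.le)
      (h2 t ht0.le) m
    have e2 : ‖Complex.exp (t * lam) • mult d x (fun k => ((Real.exp (-t) : ℝ) : ℂ) ^ k * m k)
        - mult d x m‖ = ‖mult d x (fun k => (1 + (c:ℂ) * ((Real.exp (-t) : ℝ) : ℂ) ^ k) * m k)‖ := by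
      rw [hexp, ← mult_smul, ← mult_sub, ← norm_neg]
      have hneg : ∀ m' : ℕ → ℂ, - mult d x m' = mult d x (fun k => - m' k) := by
        intro m'; simp [mult]
      rw [hneg]
      congr 2; ext k; ring
    rw [e2] at hmv
    have hmv2 : ‖mult d x (fun k => (1 + (c:ℂ) * ((Real.exp (-t) : ℝ) : ℂ) ^ k) * m k)‖
        ≤ c0 * R * t := by
      refine hmv.trans ?_
      gcongr
      exact max_le hc0 hcc
    have h5 : ‖lam‖ ≤ 2 * τ := by
      have : |lam.re| ≤ τ := abs_le.2 ⟨hcase.le, hlam.trans (by nlinarith)⟩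
      linarith
    have h6 : (1 - q) * ‖g‖ ≤ N * 2 ^ N * (c0 * R * t) :=
      hlow.trans (mul_le_mul_of_nonneg_left hmv2 (by positivity))
    have h7 : ‖lam‖ * ‖g‖ ≤ C2 * R := by
      rw [hC2, div_mul_eq_mul_div, le_div_iff₀ hq']
      calc ‖lam‖ * ‖g‖ * (1 - q) = ‖lam‖ * ((1 - q) * ‖g‖) := by ring
        _ ≤ (2 * τ) * (N * 2 ^ N * (c0 * R * t)) := by
            gcongr
        _ = N * 2 ^ N * c0 * Real.pi * 2 * R := by rw [ht]; field_simp
    calc ‖lam‖ * ‖g‖ ≤ C2 * R := h7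
      _ ≤ (4 + C2) * R := by gcongr; linarith

end mult

section phragmen

open Complex in
lemma cpow_inv_cpow {γ : ℝ} (h0 : 0 < γ) (h1 : γ ≤ 1) (z : ℂ) :
    (z ^ (γ : ℂ)) ^ ((γ⁻¹ : ℝ) : ℂ) = z := by
  rw [← Complex.cpow_mul]
  · rw [← Complex.ofReal_mul, mul_inv_cancel₀ h0.ne']; simp
  · have : (Complex.log z * (γ:ℂ)).im = γ * z.arg := by
      rw [Complex.im_mul_ofReal, Complex.log_im]; ring
    rw [this]
    have := Complex.neg_pi_lt_arg z
    have hpi := Real.pi_pos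
    nlinarith
  · have : (Complex.log z * (γ:ℂ)).im = γ * z.arg := by
      rw [Complex.im_mul_ofReal, Complex.log_im]; ring
    rw [this]
    have := Complex.arg_le_pi z
    have hpi := Real.pi_pos
    nlinarith

lemma cpow_cpow_inv {γ : ℝ} (h0 : 0 < γ) (h1 : γ ≤ 1) (z : ℂ) (hz : |z.arg| ≤ γ * (Real.pi / 2)) :
    (z ^ ((γ⁻¹ : ℝ) : ℂ)) ^ (γ : ℂ) = z := by
  have hpi := Real.pi_pos
  have key : |γ⁻¹ * z.arg| ≤ Real.pi / 2 := by
    rw [abs_mul, abs_of_pos (inv_pos.2 h0), inv_mul_le_iff₀ h0]; exact hz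
  have e : (Complex.log z * ((γ⁻¹ : ℝ):ℂ)).im = γ⁻¹ * z.arg := by
      rw [Complex.im_mul_ofReal, Complex.log_im]; ring
  rw [abs_le] at key
  rw [← Complex.cpow_mul]
  · rw [← Complex.ofReal_mul, inv_mul_cancel₀ h0.ne']; simp
  · rw [e]; linarith
  · rw [e]; linarith

lemma re_cpow_inv_nonneg {γ : ℝ} (h0 : 0 < γ) (z : ℂ) (hz0 : z ≠ 0)
    (hz : |z.arg| ≤ γ * (Real.pi / 2)) :
    0 ≤ (z ^ ((γ⁻¹ : ℝ) : ℂ)).re := by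
  have key : |γ⁻¹ * z.arg| ≤ Real.pi / 2 := by
    rw [abs_mul, abs_of_pos (inv_pos.2 h0), inv_mul_le_iff₀ h0]; exact hz
  have e : (Complex.log z * ((γ⁻¹ : ℝ):ℂ)).im = γ⁻¹ * z.arg := by
      rw [Complex.im_mul_ofReal, Complex.log_im]; ring
  rw [Complex.cpow_def_of_ne_zero hz0, Complex.exp_re, e]
  rw [abs_le] at key
  exact mul_nonneg (Real.exp_pos _).le (Real.cos_nonneg_of_mem_Icc ⟨key.1, key.2⟩)

/-- Points with large argument lie in the region of the resolvent bound. -/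
lemma region_of_arg {γ κ : ℝ} (h0 : 0 < γ) (h1 : γ ≤ 1) (hκ : 0 ≤ κ)
    (hγ : Real.cos (γ * (Real.pi / 2)) ≤ κ * Real.sin (γ * (Real.pi / 2)))
    (z : ℂ) (hz : γ * (Real.pi / 2) ≤ |z.arg|) : z.re ≤ κ * |z.im| := by
  have hpi := Real.pi_pos
  rcases le_or_gt z.re 0 with h | h
  · exact h.trans (by positivity)
  have hlt : |z.arg| < Real.pi / 2 := by
    rw [Complex.abs_arg_lt_pi_div_two_iff]; left; exact h
  have hc : Real.cos |z.arg| ≤ Real.cos (γ * (Real.pi / 2)) :=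
    Real.cos_le_cos_of_nonneg_of_le_pi (by positivity) (by linarith) hz
  have hs : Real.sin (γ * (Real.pi / 2)) ≤ Real.sin |z.arg| :=
    Real.sin_le_sin_of_le_of_le_pi_div_two (by nlinarith) hlt.le hz
  have hre : z.re = ‖z‖ * Real.cos |z.arg| := by
    rw [Real.cos_abs, Complex.norm_mul_cos_arg]
  have him : |z.im| = ‖z‖ * Real.sin |z.arg| := by
    rw [← Real.abs_sin_eq_sin_abs_of_abs_le_pi (Complex.abs_arg_le_pi z), ← abs_norm z, ← abs_mul,
      Complex.norm_mul_sin_arg]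
  rw [hre, him]
  have : Real.cos |z.arg| ≤ κ * Real.sin |z.arg| := by nlinarith
  nlinarith [norm_nonneg z]

lemma arg_cpow_imag {γ : ℝ} (h0 : 0 < γ) (h1 : γ ≤ 1) (y : ℝ) (hy : y ≠ 0) :
    |(((y:ℂ) * Complex.I) ^ (γ:ℂ)).arg| = γ * (Real.pi / 2) := by
  have hpi := Real.pi_pos
  have hne : (y:ℂ) * Complex.I ≠ 0 := by simp [hy]
  have ha : |((y:ℂ) * Complex.I).arg| = Real.pi / 2 := by
    rcases lt_or_gt_of_ne hy with h | h
    · have : (y:ℂ) * Complex.I = ((-y : ℝ):ℂ) * (-Complex.I) := by push_cast; ring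
      rw [this, Complex.arg_real_mul _ (by linarith), Complex.arg_neg_I, abs_neg, abs_of_pos (by positivity)]
    · rw [Complex.arg_real_mul _ h, Complex.arg_I, abs_of_pos (by positivity)]
  have e : (Complex.log ((y:ℂ) * Complex.I) * (γ:ℂ)).im = γ * ((y:ℂ) * Complex.I).arg := by
      rw [Complex.im_mul_ofReal, Complex.log_im]; ring
  have hb := Complex.abs_arg_le_pi ((y:ℂ) * Complex.I)
  rw [Complex.cpow_def_of_ne_zero hne, Complex.arg_exp, e]
  have h2 : |γ * ((y:ℂ) * Complex.I).arg| = γ * (Real.pi / 2) := by rw [abs_mul, ha, abs_of_pos h0]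
  have h3 := abs_le.1 h2.le
  rw [toIocMod_eq_self _ |>.2]
  · exact h2
  · constructor <;> nlinarith

lemma norm_blaschke_le {a : ℝ} (ha : 0 ≤ a) {z : ℂ} (hz : 0 ≤ z.re) : ‖(z - a) / (z + a)‖ ≤ 1 := by
  rw [norm_div]
  refine div_le_one_of_le₀ ?_ (norm_nonneg _)
  rw [← sq_le_sq₀ (norm_nonneg _) (norm_nonneg _), Complex.sq_norm, Complex.sq_norm,
    Complex.normSq_apply, Complex.normSq_apply]
  simp
  nlinarith [mul_nonneg ha hz]

end phragmen

/-- The power map. -/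
def phi (γ : ℝ) (z : ℂ) : ℂ := z ^ (γ : ℂ)
/-- The preimage of `k` under the power map. -/
def apt (γ : ℝ) (k : ℕ) : ℝ := (k : ℝ) ^ γ⁻¹
/-- Blaschke factor. -/
def bl (γ : ℝ) (k : ℕ) (z : ℂ) : ℂ := (z - apt γ k) / (z + apt γ k)
/-- The regularised multiplier. -/
def uu (γ : ℝ) (k : ℕ) (z : ℂ) : ℂ :=
  if k = 0 then 1 else phi γ z / ((z + apt γ k) * dslope (phi γ) (apt γ k) z)
/-- The multiplier times the Blaschke product. -/
def HH (γ : ℝ) (d k : ℕ) (z : ℂ) : ℂ := uu γ k z * ∏ j ∈ (Finset.Icc 1 d).erase k, bl γ j z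

section
variable {γ : ℝ}

lemma apt_nonneg (k : ℕ) : 0 ≤ apt γ k := Real.rpow_nonneg (by positivity) _
lemma apt_pos {k : ℕ} (hk : k ≠ 0) : 0 < apt γ k :=
  Real.rpow_pos_of_pos (by positivity) _

lemma phi_apt (h0 : 0 < γ) (k : ℕ) : phi γ (apt γ k) = k := by
  unfold phi apt
  rw [← Complex.ofReal_cpow (Real.rpow_nonneg (by positivity) _), Real.rpow_inv_rpow (by positivity) h0.ne']
  simp

lemma eq_apt_of_phi (h0 : 0 < γ) (h1 : γ ≤ 1) {k : ℕ} {z : ℂ} (h : phi γ z = k) : z = apt γ k := by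
  have := cpow_inv_cpow h0 h1 z
  unfold phi at h
  rw [h] at this
  rw [← this]; unfold apt
  rw [Complex.ofReal_cpow (by positivity)]; simp

lemma phi_diff (h0 : 0 < γ) {z : ℂ} (hz : 0 < z.re) : DifferentiableAt ℂ (phi γ) z := by
  unfold phi
  exact DifferentiableAt.cpow_const differentiableAt_id (Or.inl hz)

lemma phi_cont (h0 : 0 < γ) {z : ℂ} (hz : 0 ≤ z.re) : ContinuousAt (phi γ) z := by
  unfold phi
  exact Complex.continuousAt_cpow_const_of_re_pos (Or.inl hz) (by simpa using h0)

lemma dslope_ne (h0 : 0 < γ) (h1 : γ ≤ 1) {k : ℕ} (hk : k ≠ 0) (z : ℂ) :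
    dslope (phi γ) (apt γ k) z ≠ 0 := by
  by_cases hz : z = apt γ k
  · rw [hz, dslope_same]
    have hd : HasDerivAt (phi γ) ((γ:ℂ) * (apt γ k : ℂ) ^ ((γ:ℂ) - 1) * 1) (apt γ k : ℂ) := by
      unfold phi
      exact (hasDerivAt_id _).cpow_const (Or.inl (by simpa using apt_pos hk))
    rw [hd.deriv]
    have h3 : (apt γ k : ℂ) ≠ 0 := by exact_mod_cast (apt_pos hk).ne'
    have h2 : (γ:ℂ) ≠ 0 := by exact_mod_cast h0.ne'
    simp [h2, h3, Complex.cpow_eq_zero_iff]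
  · rw [dslope_of_ne _ hz, slope_def_field, phi_apt h0]
    refine div_ne_zero (fun h => hz ?_) (sub_ne_zero.2 hz)
    exact eq_apt_of_phi h0 h1 (sub_eq_zero.1 h)

lemma add_apt_ne {k : ℕ} (hk : k ≠ 0) {z : ℂ} (hz : 0 ≤ z.re) : z + apt γ k ≠ 0 := by
  intro h
  have := congrArg Complex.re h
  simp at this
  linarith [apt_pos (γ := γ) hk]

lemma uu_eq (h0 : 0 < γ) (h1 : γ ≤ 1) {k : ℕ} (hk : k ≠ 0) {z : ℂ} (hz : 0 ≤ z.re) (hne : phi γ z ≠ k) :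
    uu γ k z = bl γ k z * (phi γ z / (phi γ z - k)) := by
  have hz' : z ≠ apt γ k := by rintro rfl; exact hne (phi_apt h0 k)
  have := add_apt_ne (γ := γ) hk hz
  have h2 := sub_ne_zero.2 hne
  have h3 := sub_ne_zero.2 hz'
  simp only [uu, hk, if_false, bl]
  rw [dslope_of_ne _ hz', slope_def_field, phi_apt h0]
  field_simp

lemma HH_eq (h0 : 0 < γ) (h1 : γ ≤ 1) {d k : ℕ} (hkd : k ≤ d) {z : ℂ} (hz : 0 ≤ z.re) (hz0 : phi γ z ≠ 0)
    (hne : phi γ z ≠ k) :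
    HH γ d k z = (∏ j ∈ Finset.Icc 1 d, bl γ j z) * (phi γ z / (phi γ z - k)) := by
  unfold HH
  by_cases hk : k = 0
  · subst hk
    simp [uu, hz0]
  · rw [uu_eq h0 h1 hk hz hne, ← Finset.mul_prod_erase (Finset.Icc 1 d) (fun j => bl γ j z) (a := k)
      (by simp; omega)]
    ring

lemma norm_bl_le (k : ℕ) {z : ℂ} (hz : 0 ≤ z.re) : ‖bl γ k z‖ ≤ 1 := norm_blaschke_le (apt_nonneg k) hz

lemma norm_prod_bl_le (s : Finset ℕ) {z : ℂ} (hz : 0 ≤ z.re) : ‖∏ j ∈ s, bl γ j z‖ ≤ 1 := by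
  rw [norm_prod]
  exact Finset.prod_le_one (fun _ _ => norm_nonneg _) fun j _ => norm_bl_le j hz

lemma HH_diff (h0 : 0 < γ) (h1 : γ ≤ 1) (d k : ℕ) :
    DifferentiableOn ℂ (HH γ d k) {z : ℂ | 0 < z.re} := by
  have hopen : IsOpen {z : ℂ | 0 < z.re} := isOpen_lt continuous_const Complex.continuous_re
  have hphi : DifferentiableOn ℂ (phi γ) {z : ℂ | 0 < z.re} := fun z hz =>
    (phi_diff h0 hz).differentiableWithinAt
  unfold HH
  refine DifferentiableOn.mul ?_ ?_
  · unfold uu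
    by_cases hk : k = 0
    · simp [hk]
    · simp only [hk, if_false]
      refine hphi.div (DifferentiableOn.mul (by fun_prop) ?_) ?_
      · rw [Complex.differentiableOn_dslope (hopen.mem_nhds (by simpa using apt_pos hk))]
        exact hphi
      · intro z hz
        exact mul_ne_zero (add_apt_ne hk (le_of_lt hz)) (dslope_ne h0 h1 hk z)
  · refine DifferentiableOn.fun_finsetProd ?_
    intro j hj
    unfold bl
    refine DifferentiableOn.div (by fun_prop) (by fun_prop) ?_
    intro z hz
    exact add_apt_ne (by simp at hj; omega) (le_of_lt hz)

lemma HH_cont (h0 : 0 < γ) (h1 : γ ≤ 1) (d k : ℕ) :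
    ContinuousOn (HH γ d k) {z : ℂ | 0 ≤ z.re} := by
  have hopen : IsOpen {z : ℂ | 0 < z.re} := isOpen_lt continuous_const Complex.continuous_re
  have hphi : ContinuousOn (phi γ) {z : ℂ | 0 ≤ z.re} := fun z hz =>
    (phi_cont h0 hz).continuousWithinAt
  unfold HH
  refine ContinuousOn.mul ?_ ?_
  · unfold uu
    by_cases hk : k = 0
    · simp only [hk, if_true]; exact continuousOn_const
    · simp only [hk, if_false]
      refine hphi.div (ContinuousOn.mul (by fun_prop) ?_) ?_
      · rw [continuousOn_dslope]
        · exact ⟨hphi, phi_diff h0 (by simpa using apt_pos hk)⟩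
        · refine Filter.mem_of_superset (hopen.mem_nhds (x := (apt γ k : ℂ)) (by simpa using apt_pos hk)) ?_
          intro z (hz : 0 < z.re); exact hz.le
      · intro z hz
        exact mul_ne_zero (add_apt_ne hk hz) (dslope_ne h0 h1 hk z)
  · refine continuousOn_finsetProd _ ?_
    intro j hj
    unfold bl
    refine ContinuousOn.div (by fun_prop) (by fun_prop) ?_
    intro z hz
    exact add_apt_ne (by simp at hj; omega) hz

lemma norm_phi (h0 : 0 < γ) (z : ℂ) : ‖phi γ z‖ = ‖z‖ ^ γ := by
  unfold phi
  rw [Complex.norm_cpow_real]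

lemma norm_HH_le (h0 : 0 < γ) (h1 : γ ≤ 1) {d k : ℕ} (hd : 1 ≤ d) (hkd : k ≤ d) {z : ℂ} (hz : 0 ≤ z.re)
    (hlarge : 2 * (d:ℝ) ≤ ‖z‖ ^ γ) : ‖HH γ d k z‖ ≤ 2 := by
  rw [← norm_phi h0] at hlarge
  have hd' : (1:ℝ) ≤ d := by exact_mod_cast hd
  have hk' : (k:ℝ) ≤ d := by exact_mod_cast hkd
  have hn : ‖phi γ z‖ - k ≤ ‖phi γ z - k‖ := by
    have := norm_sub_norm_le (phi γ z) (k:ℂ)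
    simpa using this
  have hpos : 0 < ‖phi γ z - k‖ := by linarith
  rw [HH_eq h0 h1 hkd hz, norm_mul]
  · have : ‖phi γ z / (phi γ z - k)‖ ≤ 2 := by
      rw [norm_div, div_le_iff₀ hpos]; linarith
    calc _ ≤ 1 * 2 := mul_le_mul (norm_prod_bl_le _ hz) this (norm_nonneg _) (by norm_num)
      _ = 2 := by norm_num
  · rw [← norm_pos_iff]; linarith
  · rw [← sub_ne_zero, ← norm_pos_iff]; exact hpos

end

section
variable {Y : Type*} [NormedAddCommGroup Y] [NormedSpace ℂ Y] {d : ℕ} {x : ℕ → Y} {γ κ B : ℝ}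

lemma mult_HH_eq (h0 : 0 < γ) (h1 : γ ≤ 1) {z : ℂ} (hz : 0 ≤ z.re) (hz0 : phi γ z ≠ 0)
    (hne : ∀ k : ℕ, k ≤ d → phi γ z ≠ k) :
    mult d x (fun k => HH γ d k z) =
      (∏ j ∈ Finset.Icc 1 d, bl γ j z) • mult d x (fun k => phi γ z / (phi γ z - k)) := by
  rw [← mult_smul]
  exact mult_congr _ _ fun k hk => HH_eq h0 h1 hk hz hz0 (hne k hk)

lemma norm_mult_HH_large (h0 : 0 < γ) (h1 : γ ≤ 1) (hd : 1 ≤ d) {z : ℂ} (hz : 0 ≤ z.re)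
    (hlarge : (2 * (d:ℝ)) ^ γ⁻¹ ≤ ‖z‖) :
    ‖mult d x (fun k => HH γ d k z)‖ ≤ 2 * ∑ k ∈ Finset.range (d + 1), ‖x k‖ := by
  have hl : 2 * (d:ℝ) ≤ ‖z‖ ^ γ := by
    calc 2 * (d:ℝ) = ((2 * (d:ℝ)) ^ γ⁻¹) ^ γ := (Real.rpow_inv_rpow (by positivity) h0.ne').symm
      _ ≤ _ := Real.rpow_le_rpow (by positivity) hlarge h0.le
  unfold mult
  refine (norm_sum_le _ _).trans ?_
  rw [Finset.mul_sum]
  refine Finset.sum_le_sum fun k hk => ?_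
  rw [norm_smul]
  exact mul_le_mul_of_nonneg_right
    (norm_HH_le h0 h1 hd (by simpa [Nat.lt_succ_iff] using hk) hz hl) (norm_nonneg _)

lemma not_region {lam : ℂ} (h : lam.re ≤ κ * |lam.im|) (h0 : lam ≠ 0) (k : ℕ) : lam ≠ k := by
  rintro rfl
  simp at h h0
  omega

/-- Phragmen-Lindelof step. -/
lemma norm_mult_HH_le (h0 : 0 < γ) (h1 : γ ≤ 1) (hκ : 0 ≤ κ) (hd : 1 ≤ d)
    (hγ : Real.cos (γ * (Real.pi / 2)) ≤ κ * Real.sin (γ * (Real.pi / 2)))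
    (hG : ∀ lam : ℂ, lam ≠ 0 → lam.re ≤ κ * |lam.im| →
      ‖mult d x (fun k => lam / (lam - k))‖ ≤ B) {z : ℂ} (hz : 0 ≤ z.re) :
    ‖mult d x (fun k => HH γ d k z)‖ ≤ B := by
  have hcl : closure {z : ℂ | 0 < z.re} = {z : ℂ | 0 ≤ z.re} := Complex.closure_setOf_lt_re 0
  have hcont : ContinuousOn (fun z => mult d x (fun k => HH γ d k z)) {z : ℂ | 0 ≤ z.re} := by
    unfold mult
    exact continuousOn_finsetSum _ fun k _ => (HH_cont h0 h1 d k).smul continuousOn_const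
  have hbd : ∀ y : ℝ, y ≠ 0 → ‖mult d x (fun k => HH γ d k (y * Complex.I))‖ ≤ B := by
    intro y hy
    have hre : 0 ≤ ((y:ℂ) * Complex.I).re := by simp
    have hp0 : phi γ ((y:ℂ) * Complex.I) ≠ 0 := by
      unfold phi
      simp [Complex.cpow_eq_zero_iff, hy]
    have hreg : (phi γ ((y:ℂ) * Complex.I)).re ≤ κ * |(phi γ ((y:ℂ) * Complex.I)).im| :=
      region_of_arg h0 h1 hκ hγ _ (arg_cpow_imag h0 h1 y hy).ge
    rw [mult_HH_eq h0 h1 hre hp0 (fun k _ => not_region hreg hp0 k), norm_smul]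
    refine (mul_le_mul (norm_prod_bl_le _ hre) (hG _ hp0 hreg) (norm_nonneg _) zero_le_one).trans ?_
    rw [one_mul]
  refine PhragmenLindelof.right_half_plane_of_bounded_on_real (C := B)
    (f := fun z => mult d x (fun k => HH γ d k z)) ?_ ?_ ?_ ?_ hz
  · constructor
    · unfold mult
      exact DifferentiableOn.fun_sum fun k _ => (HH_diff h0 h1 d k).smul (differentiableOn_const _)
    · rw [hcl]; exact hcont
  · refine ⟨0, by norm_num, 0, ?_⟩
    refine Asymptotics.IsBigO.of_bound (2 * ∑ k ∈ Finset.range (d + 1), ‖x k‖) ?_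
    rw [Filter.eventually_inf_principal]
    filter_upwards [tendsto_norm_cobounded_atTop.eventually_ge_atTop ((2 * (d:ℝ)) ^ γ⁻¹)] with w hw hw'
    simpa using norm_mult_HH_large (x := x) h0 h1 hd (le_of_lt hw') hw
  · refine ⟨2 * ∑ k ∈ Finset.range (d + 1), ‖x k‖, ?_⟩
    rw [Filter.eventually_map]
    filter_upwards [Filter.eventually_ge_atTop ((2 * (d:ℝ)) ^ γ⁻¹), Filter.eventually_ge_atTop 0] with y hy hy0
    exact norm_mult_HH_large h0 h1 hd (by simpa using hy0) (by simpa [abs_of_nonneg hy0] using hy)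
  · intro y
    by_cases hy : y = 0
    · subst hy
      have hc : Continuous (fun y : ℝ => mult d x (fun k => HH γ d k (y * Complex.I))) := by
        refine hcont.comp_continuous (by fun_prop) ?_
        intro y; simp
      have ht : Filter.Tendsto (fun y : ℝ => ‖mult d x (fun k => HH γ d k (y * Complex.I))‖)
          (nhdsWithin 0 {0}ᶜ) (nhds ‖mult d x (fun k => HH γ d k ((0:ℝ) * Complex.I))‖) :=
        (hc.norm.tendsto 0).mono_left nhdsWithin_le_nhds
      refine le_of_tendsto ht ?_
      filter_upwards [self_mem_nhdsWithin] with y hy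
      exact hbd y hy
    · exact hbd y hy

lemma bl_lower {k : ℕ} (hd : 1 ≤ d) (hkd : k ≤ d) (h0 : 0 < γ) {z : ℂ} 
    (hz : ‖z‖ = 2 * (d:ℝ) ^ (γ⁻¹ + 1)) : 
    1 ≤ Real.exp (2 / d) * ‖bl γ k z‖ := by
  have hd' : (1:ℝ) ≤ d := by exact_mod_cast hd
  have hD : 1 ≤ (d:ℝ) ^ γ⁻¹ := Real.one_le_rpow hd' (by positivity)
  have hz2 : ‖z‖ = 2 * d * (d:ℝ) ^ γ⁻¹ := by rw [hz, Real.rpow_add (by linarith)]; simp; ring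
  have ha : apt γ k ≤ (d:ℝ) ^ γ⁻¹ := Real.rpow_le_rpow (by positivity) (by exact_mod_cast hkd) (by positivity)
  have ha0 := apt_nonneg (γ := γ) k
  set a := apt γ k
  have hm : ‖z‖ - a ≤ ‖z - a‖ := by
    have := norm_sub_norm_le z (a:ℂ)
    simpa [abs_of_nonneg ha0] using this
  have hpl : ‖z + a‖ ≤ ‖z‖ + a := by
    have := norm_add_le z (a:ℂ)
    simpa [abs_of_nonneg ha0] using this
  have hpos : 0 < ‖z‖ - a := by nlinarith
  have hpp : 0 < ‖z + a‖ := by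
    have := norm_sub_norm_le z (-a:ℂ)
    simp [abs_of_nonneg ha0] at this
    linarith
  have he : 1 + 2 / (d:ℝ) ≤ Real.exp (2 / d) := by linarith [Real.add_one_le_exp (2 / (d:ℝ))]
  have e : ‖bl γ k z‖ = ‖z - a‖ / ‖z + a‖ := by unfold bl; rw [norm_div]
  rw [e, ← mul_div_assoc, le_div_iff₀ hpp, one_mul]
  refine hpl.trans (le_trans ?_ (mul_le_mul he hm hpos.le (Real.exp_pos _).le))
  have h3 : a * d ≤ ‖z‖ / 2 := by rw [hz2]; nlinarith
  have h4 : a ≤ ‖z‖ / 2 / d := by rw [le_div_iff₀ (by linarith)]; exact h3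
  have h5 : (1 + 2 / (d:ℝ)) * (‖z‖ - a) = ‖z‖ - a + 2 * ‖z‖ / d - 2 * a / d := by ring
  have h6 : 2 * a / d ≤ 2 * (‖z‖ / 2) / d := by
    refine div_le_div_of_nonneg_right ?_ (by linarith)
    nlinarith
  have h7 : 2 * (‖z‖ / 2) / d = 2 * (‖z‖ / 2 / d) := by ring
  have h8 : 2 * ‖z‖ / d = 4 * (‖z‖ / 2 / d) := by ring
  rw [h5]
  linarith

/-- Bound on a circle. -/
lemma circle_bound (h0 : 0 < γ) (h1 : γ ≤ 1) (hκ : 0 ≤ κ) (hd : 1 ≤ d)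
    (hγ : Real.cos (γ * (Real.pi / 2)) ≤ κ * Real.sin (γ * (Real.pi / 2)))
    (hG : ∀ lam : ℂ, lam ≠ 0 → lam.re ≤ κ * |lam.im| →
      ‖mult d x (fun k => lam / (lam - k))‖ ≤ B) {lam : ℂ}
    (hlam : ‖lam‖ = (2 * (d:ℝ) ^ (γ⁻¹ + 1)) ^ γ) :
    ‖mult d x (fun k => lam / (lam - k))‖ ≤ Real.exp 2 * B := by
  have hd' : (1:ℝ) ≤ d := by exact_mod_cast hd
  have hlpos : 0 < ‖lam‖ := by rw [hlam]; positivity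
  have hl0 : lam ≠ 0 := norm_pos_iff.1 hlpos
  rcases le_total (γ * (Real.pi / 2)) |lam.arg| with h | h
  · have hb := hG lam hl0 (region_of_arg h0 h1 hκ hγ lam h)
    have hB : 0 ≤ B := (norm_nonneg _).trans hb
    have : 1 ≤ Real.exp 2 := Real.one_le_exp (by norm_num)
    nlinarith
  · set z := lam ^ ((γ⁻¹ : ℝ) : ℂ) with hzdef
    have hphi : phi γ z = lam := cpow_cpow_inv h0 h1 lam h
    have hre : 0 ≤ z.re := re_cpow_inv_nonneg h0 lam hl0 h
    have hnz : ‖z‖ = 2 * (d:ℝ) ^ (γ⁻¹ + 1) := by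
      rw [hzdef, Complex.norm_cpow_real, hlam, Real.rpow_rpow_inv (by positivity) h0.ne']
    have hbig : (d:ℝ) < ‖lam‖ := by
      rw [← Real.rpow_inv_rpow (x := (d:ℝ)) (by positivity) h0.ne', hlam]
      refine Real.rpow_lt_rpow (by positivity) ?_ h0
      rw [Real.rpow_add (by linarith), Real.rpow_one]
      have : 1 ≤ (d:ℝ) ^ γ⁻¹ := Real.one_le_rpow hd' (by positivity)
      nlinarith
    have hne : ∀ k : ℕ, k ≤ d → phi γ z ≠ k := by
      intro k hk he
      rw [hphi] at he
      rw [he] at hbig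
      simp at hbig; omega
    have hPL := norm_mult_HH_le h0 h1 hκ hd hγ hG hre
    rw [mult_HH_eq h0 h1 hre (by rwa [hphi]) hne, hphi, norm_smul, norm_prod] at hPL
    have hprod : 1 ≤ Real.exp 2 * ∏ j ∈ Finset.Icc 1 d, ‖bl γ j z‖ := by
      have : Real.exp 2 = ∏ j ∈ Finset.Icc 1 d, Real.exp (2 / d) := by
        rw [Finset.prod_const, ← Real.exp_nat_mul]; congr 1; simp; field_simp
      rw [this, ← Finset.prod_mul_distrib]
      refine Finset.one_le_prod ?_
      intro j hj
      exact bl_lower hd (by simp at hj; omega) h0 hnz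
    calc _ ≤ (Real.exp 2 * ∏ j ∈ Finset.Icc 1 d, ‖bl γ j z‖) * ‖mult d x (fun k => lam / (lam - k))‖ :=
          le_mul_of_one_le_left (norm_nonneg _) hprod
      _ ≤ _ := by rw [mul_assoc]; exact mul_le_mul_of_nonneg_left hPL (Real.exp_pos _).le

/-- Bernstein type inequality. -/
lemma bernstein (h0 : 0 < γ) (h1 : γ ≤ 1) (hκ : 0 ≤ κ) (hd : 1 ≤ d)
    (hγ : Real.cos (γ * (Real.pi / 2)) ≤ κ * Real.sin (γ * (Real.pi / 2)))
    (hG : ∀ lam : ℂ, lam ≠ 0 → lam.re ≤ κ * |lam.im| →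
      ‖mult d x (fun k => lam / (lam - k))‖ ≤ B) :
    ‖mult d x (fun k => (k:ℂ))‖ ≤ Real.exp 2 * B * (2 * (d:ℝ) ^ (1 + γ)) := by
  have hd' : (1:ℝ) ≤ d := by exact_mod_cast hd
  set r := (2 * (d:ℝ) ^ (γ⁻¹ + 1)) ^ γ with hr
  have hrd : (d:ℝ) < r := by
    rw [← Real.rpow_inv_rpow (x := (d:ℝ)) (by positivity) h0.ne', hr]
    refine Real.rpow_lt_rpow (by positivity) ?_ h0
    rw [Real.rpow_add (by linarith), Real.rpow_one]
    have : 1 ≤ (d:ℝ) ^ γ⁻¹ := Real.one_le_rpow hd' (by positivity)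
    nlinarith
  have hr0 : 0 < r := by linarith
  have hr2 : r ≤ 2 * (d:ℝ) ^ (1 + γ) := by
    rw [hr, Real.mul_rpow (by norm_num) (by positivity), ← Real.rpow_mul (by linarith)]
    have e : (γ⁻¹ + 1) * γ = 1 + γ := by field_simp
    rw [e]
    refine mul_le_mul_of_nonneg_right ?_ (by positivity)
    calc (2:ℝ) ^ γ ≤ 2 ^ (1:ℝ) := Real.rpow_le_rpow_of_exponent_le (by norm_num) h1
      _ = 2 := by simp
  have hden : ∀ w : ℂ, ‖w‖ ≤ r⁻¹ → ∀ k ∈ Finset.range (d + 1), (1 - k * w : ℂ) ≠ 0 := by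
    intro w hw k hk h
    have hk' : (k:ℝ) ≤ d := by exact_mod_cast (by simpa [Nat.lt_succ_iff] using hk)
    have : (k:ℝ) * ‖w‖ = 1 := by
      have h2 := congrArg norm (sub_eq_zero.1 h)
      simpa using h2.symm
    have h3 : (k:ℝ) * ‖w‖ ≤ d * r⁻¹ := mul_le_mul hk' hw (norm_nonneg _) (by positivity)
    have h4 : d * r⁻¹ < 1 := by rw [← div_eq_mul_inv, div_lt_one hr0]; exact hrd
    linarith
  have hB : 0 ≤ B := (norm_nonneg _).trans (hG (-1) (by simp) (by simp))
  have hder : HasDerivAt (fun w : ℂ => mult d x (fun k => 1 / (1 - k * w)))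
      (mult d x (fun k => (k:ℂ))) 0 := by
    unfold mult
    refine HasDerivAt.fun_sum fun k hk => ?_
    refine HasDerivAt.smul_const ?_ _
    have h2 : HasDerivAt (fun w : ℂ => 1 - k * w) (-(k:ℂ)) 0 := by
      have := ((hasDerivAt_id (0:ℂ)).const_mul (k:ℂ)).const_sub 1
      simpa using this
    have h3 := h2.fun_inv (by simp)
    simpa using h3
  have hC := Complex.norm_deriv_le_of_forall_mem_sphere_norm_le (c := (0:ℂ)) (R := r⁻¹) (C := Real.exp 2 * B)
    (f := fun w : ℂ => mult d x (fun k => 1 / (1 - k * w))) (inv_pos.2 hr0) ?_ ?_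
  · rw [hder.deriv] at hC
    rw [div_inv_eq_mul] at hC
    exact hC.trans (mul_le_mul_of_nonneg_left hr2 (by positivity))
  · refine DifferentiableOn.diffContOnCl_ball (U := Metric.closedBall 0 r⁻¹) ?_ le_rfl
    unfold mult
    refine DifferentiableOn.fun_sum fun k hk => DifferentiableOn.smul_const ?_ _
    refine DifferentiableOn.div (by fun_prop) (by fun_prop) ?_
    intro w hw
    exact hden w (by simpa using hw) k hk
  · intro w hw
    have hw' : ‖w‖ = r⁻¹ := by simpa using hw
    have hw0 : w ≠ 0 := by rw [← norm_pos_iff, hw']; positivity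
    have := circle_bound (lam := w⁻¹) h0 h1 hκ hd hγ hG (by rw [norm_inv, hw', inv_inv])
    convert this using 2
    refine mult_congr _ _ fun k hk => ?_
    have h5 := hden w hw'.le k (by simpa [Nat.lt_succ_iff] using hk)
    have h6 : w⁻¹ - k = w⁻¹ * (1 - k * w) := by field_simp
    rw [h6]; field_simp
end

section final

lemma sum_walsh_mul {n : ℕ} (ε δ : Fin n → Bool) :
    ∑ A : Finset (Fin n), walsh A ε * walsh A δ = if ε = δ then (2:ℝ) ^ n else 0 := by
  have h := Finset.prod_one_add (f := fun i : Fin n => sgn (ε i) * sgn (δ i)) Finset.univ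
  simp only [Finset.powerset_univ] at h
  have e : ∀ A : Finset (Fin n), walsh A ε * walsh A δ = ∏ i ∈ A, sgn (ε i) * sgn (δ i) := by
    intro A; unfold walsh; rw [Finset.prod_mul_distrib]
  simp only [e]
  rw [← h]
  split_ifs with hh
  · subst hh
    have : ∀ i, 1 + sgn (ε i) * sgn (ε i) = 2 := by
      intro i; unfold sgn; split_ifs <;> norm_num
    simp [this]
  · obtain ⟨i, hi⟩ := Function.ne_iff.1 hh
    refine Finset.prod_eq_zero (Finset.mem_univ i) ?_
    unfold sgn
    cases h1 : ε i <;> cases h2 : δ i <;> simp_all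

lemma inversion {n : ℕ} (f : (Fin n → Bool) → X) (ε : Fin n → Bool) :
    ∑ A : Finset (Fin n), walsh A ε • coeff f A = f ε := by
  unfold coeff
  simp only [Finset.smul_sum, smul_smul]
  rw [Finset.sum_comm]
  have : ∀ δ : Fin n → Bool, ∑ A : Finset (Fin n), (walsh A ε * ((2 ^ n : ℝ)⁻¹ * walsh A δ)) • f δ
      = if ε = δ then f δ else 0 := by
    intro δ
    rw [← Finset.sum_smul]
    have e : ∑ A : Finset (Fin n), (walsh A ε * ((2 ^ n : ℝ)⁻¹ * walsh A δ))
      = (2 ^ n : ℝ)⁻¹ * ∑ A : Finset (Fin n), walsh A ε * walsh A δ := by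
      rw [Finset.mul_sum]; exact Finset.sum_congr rfl fun A _ => by ring
    rw [e, sum_walsh_mul]
    split_ifs <;> simp
  simp [this]

lemma lpNorm_eq_synth (p : ℝ) (hp : 1 < p) {n : ℕ} (c : Finset (Fin n) → X)
    (g : (Fin n → Bool) → X) (hg : ∀ ε, g ε = ∑ A, walsh A ε • c A) :
    lpNorm p g = ((2 ^ n : ℝ)⁻¹) ^ (1 / p) * ‖synth p c‖ := by
  rw [norm_synth p hp, lpNorm, Real.mul_rpow (by positivity)
    (Finset.sum_nonneg fun _ _ => Real.rpow_nonneg (norm_nonneg _) _)]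
  simp only [hg, synth_apply]

/-- The degree `k` part. -/
def part (p : ℝ) {n : ℕ} (c : Finset (Fin n) → X) (k : ℕ) :
    PiLp (ENNReal.ofReal p) (fun _ : Fin n → Bool => X) :=
  synth p (fun A => if A.card = k then c A else 0)

lemma mult_part (p : ℝ) [Fact (1 ≤ ENNReal.ofReal p)] {n d : ℕ} (c : Finset (Fin n) → X)
    (hc : ∀ A, d < A.card → c A = 0) (m : ℕ → ℂ) :
    mult d (part p c) m = synth p (fun A => m A.card • c A) := by
  ext ε
  unfold mult part
  simp only [← synth_smul]
  rw [WithLp.ofLp_sum, Finset.sum_apply]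
  simp only [synth_apply]
  rw [Finset.sum_comm]
  refine Finset.sum_congr rfl fun A _ => ?_
  rw [← Finset.smul_sum]
  congr 1
  simp only [Pi.smul_apply, smul_ite, smul_zero]
  rw [Finset.sum_ite_eq]
  split_ifs with h
  · rfl
  · rw [hc A (by simpa [Nat.lt_succ_iff] using h)]; simp

lemma exists_kappa (N : ℕ) {K : ℝ} (hK : K < 2 ^ N) :
    ∃ κ : ℝ, 0 < κ ∧ κ ≤ 1 ∧
      (Real.exp (Real.pi * κ) / (1 + Real.exp (Real.pi * κ))) ^ N * K < 1 := by
  have hc : Continuous (fun κ : ℝ =>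
      (Real.exp (Real.pi * κ) / (1 + Real.exp (Real.pi * κ))) ^ N * K) := by
    refine Continuous.mul (Continuous.pow (Continuous.div (by fun_prop) (by fun_prop) ?_) _)
      continuous_const
    intro κ; positivity
  have h0 : (Real.exp (Real.pi * 0) / (1 + Real.exp (Real.pi * 0))) ^ N * K < 1 := by
    simp only [mul_zero, Real.exp_zero]
    rw [div_pow, one_pow, show (1:ℝ) + 1 = 2 by norm_num, div_mul_eq_mul_div, one_mul,
      div_lt_one (by positivity)]
    exact hK
  have hev := (hc.tendsto 0).eventually (gt_mem_nhds h0)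
  have hev2 : ∀ᶠ κ : ℝ in nhdsWithin 0 (Set.Ioi 0), _ := nhdsWithin_le_nhds hev
  obtain ⟨κ, h1, h2⟩ := (hev2.and (Ioc_mem_nhdsGT (show (0:ℝ) < 1 by norm_num))).exists
  exact ⟨κ, h2.1, h2.2, h1⟩

lemma exists_gamma {κ : ℝ} (hκ : 0 < κ) : ∃ γ : ℝ, 0 < γ ∧ γ < 1 ∧
    Real.cos (γ * (Real.pi / 2)) ≤ κ * Real.sin (γ * (Real.pi / 2)) := by
  have hc : Continuous (fun γ : ℝ =>
      κ * Real.sin (γ * (Real.pi / 2)) - Real.cos (γ * (Real.pi / 2))) := by fun_prop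
  have h0 : 0 < κ * Real.sin (1 * (Real.pi / 2)) - Real.cos (1 * (Real.pi / 2)) := by
    simpa using hκ
  have hev := (hc.tendsto 1).eventually (lt_mem_nhds h0)
  have hev2 : ∀ᶠ κ : ℝ in nhdsWithin 1 (Set.Iio 1), _ := nhdsWithin_le_nhds hev
  obtain ⟨γ, h1, h2⟩ := (hev2.and (Ioo_mem_nhdsLT (show (0:ℝ) < 1 by norm_num))).exists
  exact ⟨γ, h2.1, h2.2, by linarith⟩

end final

/-- **Improved Bernstein–Markov inequality for the Laplacian** on `K`-convex spaces. -/
theorem stmt7 {X : Type*} [NormedAddCommGroup X] [NormedSpace ℂ X] [CompleteSpace X]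
    (hX : KConvex X) (p : ℝ) (hp : 1 < p) :
    ∃ α : ℝ, 1 ≤ α ∧ α < 2 ∧ ∃ C : ℝ, 0 < C ∧
      ∀ n d : ℕ, 1 ≤ d → d ≤ n → ∀ f : (Fin n → Bool) → X, degLE f d →
        lpNorm p (lap f) ≤ C * (d : ℝ) ^ α * lpNorm p f := by
  have : Fact (1 ≤ ENNReal.ofReal p) := ⟨by rw [ENNReal.one_le_ofReal]; exact hp.le⟩
  obtain ⟨n₀, hn₀, hS⟩ := signProp_of_KConvex hX
  have hn0' : (1:ℝ) ≤ n₀ := by exact_mod_cast hn₀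
  have hcard : 2 ≤ Fintype.card (Fin n₀ → Bool) := by
    simp
    calc 2 = 2 ^ 1 := rfl
      _ ≤ 2 ^ n₀ := Nat.pow_le_pow_right (by norm_num) hn₀
  obtain ⟨δ, hδ0, hδ1, hδ⟩ := hS.lp (by positivity) (by rw [div_le_one (by linarith)]; exact hn0')
    hcard hp
  set N := Fintype.card (Fin n₀ → Bool) with hN
  have h2N : (1:ℝ) ≤ 2 ^ N := one_le_pow₀ (by norm_num)
  obtain ⟨κ, hκ0, hκ1, hq⟩ := exists_kappa N (K := 2 ^ N - δ) (by linarith)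
  obtain ⟨γ, hγ0, hγ1, hγ⟩ := exists_gamma hκ0
  obtain ⟨C1, hC1⟩ : ∃ C1 : ℝ, C1 = (4 + N * 2 ^ N * Real.exp (Real.pi * κ) * Real.pi * 2 /
      (1 - (Real.exp (Real.pi * κ) / (1 + Real.exp (Real.pi * κ))) ^ N * (2 ^ N - δ))) := ⟨_, rfl⟩
  have hC1pos : 0 < C1 := by
    rw [hC1]
    have := sub_pos.2 hq
    positivity
  refine ⟨1 + γ, by linarith, by linarith, Real.exp 2 * C1 * 2, by positivity, ?_⟩
  intro n d hd hdn f hf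
  have h1 : ∀ t : ℝ, 0 ≤ t → ∀ m : ℕ → ℂ,
      ‖mult d (part p (coeff f)) (fun k => ((Real.exp (-t) : ℝ) : ℂ) ^ k * m k)‖
        ≤ ‖mult d (part p (coeff f)) m‖ := by
    intro t ht m
    rw [mult_part p _ hf, mult_part p _ hf]
    have := heat_contr p hp (Real.exp_pos (-t)).le (Real.exp_le_one_iff.2 (by linarith))
      (fun A => m A.card • coeff f A)
    convert this using 3
    ext A
    rw [mul_smul, ← Complex.ofReal_pow, Complex.coe_smul]
  have h2 : ∀ t : ℝ, 0 ≤ t → ∀ m : ℕ → ℂ,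
      ‖mult d (part p (coeff f)) (fun k => (1 - ((Real.exp (-t) : ℝ) : ℂ) ^ k) ^ N * m k)‖
        ≤ (2 ^ N - δ) * ‖mult d (part p (coeff f)) m‖ := by
    intro t ht m
    rw [mult_part p _ hf, mult_part p _ hf]
    have := heat_diff_bound p hp (hδ (Fin n → Bool)) (Real.exp_pos (-t)).le
      (Real.exp_le_one_iff.2 (by linarith)) (fun A => m A.card • coeff f A)
    convert this using 3
    ext A
    rw [mul_smul, ← Complex.coe_smul]
    push_cast
    rfl
  have hR := resolvent_bound (d := d) (x := part p (coeff f)) (N := N) (K := 2 ^ N - δ) (κ := κ)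
    (by linarith) hκ0 hκ1 hq h1 h2
  have hG : ∀ lam : ℂ, lam ≠ 0 → lam.re ≤ κ * |lam.im| →
      ‖mult d (part p (coeff f)) (fun k => lam / (lam - k))‖
        ≤ C1 * ‖mult d (part p (coeff f)) (fun _ => 1)‖ := by
    intro lam hl hreg
    have h3 := hR lam hreg (fun k => 1 / (lam - k))
    rw [← hC1] at h3
    have e1 : mult d (part p (coeff f)) (fun k => lam / (lam - k))
        = lam • mult d (part p (coeff f)) (fun k => 1 / (lam - k)) := by
      rw [← mult_smul]; congr 1; ext k; ring
    have e2 : mult d (part p (coeff f)) (fun k => (lam - k) * (1 / (lam - k)))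
        = mult d (part p (coeff f)) (fun _ => 1) :=
      mult_congr _ _ fun k _ => mul_one_div_cancel (sub_ne_zero.2 (not_region hreg hl k))
    rw [e1, norm_smul, ← e2]
    exact h3
  have hB := bernstein hγ0 hγ1.le hκ0.le hd hγ hG
  rw [mult_part p _ hf, mult_part p _ hf] at hB
  rw [lpNorm_eq_synth p hp (fun A => ((A.card : ℕ) : ℂ) • coeff f A) (lap f),
    lpNorm_eq_synth p hp (fun A => (1:ℂ) • coeff f A) f]
  · have hpos : 0 ≤ ((2 ^ n : ℝ)⁻¹) ^ (1 / p) := by positivity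
    have := mul_le_mul_of_nonneg_left hB hpos
    refine this.trans (le_of_eq ?_)
    ring
  · intro ε; simp only [one_smul]; exact (inversion f ε).symm
  · intro ε
    unfold lap
    refine Finset.sum_congr rfl fun A _ => ?_
    rw [smul_comm, ← Complex.ofReal_natCast, Complex.coe_smul]

end HammingCube
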